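/- arXiv:2411.04514 — 2 statements merged into one kernel-verified Lean document; each statement's English description precedes it below -/
import Mathlib

section
/- Let R be a commutative noetherian ring and φ : Spec R → ℤ_{≥0} a function with φ(p) ≤ depth(R_p) for all primes p. Then there is a hereditary Tor-pair (E, C) generated by a set of R-modules of finite flat dimension (namely by {S_{φ(p)}(pR_p; R_p) : p ∈ Spec R}) such that C = {M : depth_{R_p}(M_p) ≥ φ(p) for all p ∈ Spec R}. Moreover, for every i ≥ 0, C_(i) = {M : depth_{R_p}(M_p) ≥ φ(p) − i for all p ∈ Spec R}; in particular k(p) ∈ C_(i) if and only if φ(p) ≤ i. -/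
open CategoryTheory Opposite

noncomputable section

/-- Vanishing of the `n`-th Ext group of two `R`-modules. -/
def extV (R : Type) [Ring R] (M N : ModuleCat.{0} R) (n : ℕ) : Prop :=
  Subsingleton (((_root_.Ext ℤ (ModuleCat.{0} R) n).obj (op M)).obj N)

/-- Vanishing of the `n`-th Tor group of two `R`-modules. -/
def torV (R : Type) [CommRing R] (M N : ModuleCat.{0} R) (n : ℕ) : Prop :=
  Subsingleton (((Tor (ModuleCat.{0} R) n).obj M).obj N)

/-- `f : A →ₗ[R] B` is a pure monomorphism. -/
def IsPureMono (R : Type) [CommRing R] {A B : Type} [AddCommGroup A] [Module R A]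
    [AddCommGroup B] [Module R B] (f : A →ₗ[R] B) : Prop :=
  Function.Injective f ∧
    ∀ (Q : Type) [AddCommGroup Q] [Module R Q], Function.Injective (LinearMap.lTensor Q f)

/-- An `R`-module `N` is pure-injective if it is injective with respect to
pure monomorphisms. -/
def PureInjective (R : Type) [CommRing R] (N : Type) [AddCommGroup N] [Module R N] : Prop :=
  ∀ (A B : Type) [AddCommGroup A] [Module R A] [AddCommGroup B] [Module R B]
    (f : A →ₗ[R] B), IsPureMono R f → ∀ g : A →ₗ[R] N, ∃ h : B →ₗ[R] N, h.comp f = g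

/-- `N` has injective dimension at most `n`. -/
def injDimLE (R : Type) [Ring R] (N : ModuleCat.{0} R) (n : ℕ) : Prop :=
  ∀ M : ModuleCat.{0} R, ∀ j : ℕ, n < j → extV R M N j

/-- `M` has projective dimension at most `n`. -/
def projDimLE (R : Type) [Ring R] (M : ModuleCat.{0} R) (n : ℕ) : Prop :=
  ∀ N : ModuleCat.{0} R, ∀ j : ℕ, n < j → extV R M N j

/-- `M` has flat dimension at most `n`. -/
def flatDimLE (R : Type) [CommRing R] (M : ModuleCat.{0} R) (n : ℕ) : Prop :=
  ∀ N : ModuleCat.{0} R, ∀ j : ℕ, n < j → torV R M N j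

/-- The depth of a module over a commutative local ring. -/
def rdepth (A : Type) [CommRing A] [IsLocalRing A] (M : Type) [AddCommGroup M]
    [Module A M] : ℕ∞ :=
  sInf {n : ℕ∞ | ∃ i : ℕ, n = (i : ℕ∞) ∧
    ¬ extV A (ModuleCat.of A (IsLocalRing.ResidueField A)) (ModuleCat.of A M) i}

/-- `depth(R_p)`. -/
def ringDepthAt (R : Type) [CommRing R] (p : PrimeSpectrum R) : ℕ∞ :=
  rdepth (Localization.AtPrime p.asIdeal) (Localization.AtPrime p.asIdeal)

/-- `depth_{R_p}(M_p)`. -/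
def depthAt (R : Type) [CommRing R] (p : PrimeSpectrum R) (M : Type) [AddCommGroup M]
    [Module R M] : ℕ∞ :=
  rdepth (Localization.AtPrime p.asIdeal) (LocalizedModule p.asIdeal.primeCompl M)

/-- `f : M →ₗ[R] E` exhibits `E` as an injective envelope of `M`. -/
def IsInjectiveEnvelope (R : Type) [Ring R] {M E : Type} [AddCommGroup M] [Module R M]
    [AddCommGroup E] [Module R E] (f : M →ₗ[R] E) : Prop :=
  Module.Injective R E ∧ Function.Injective f ∧
    ∀ K : Submodule R E, K ≠ ⊥ → K ⊓ LinearMap.range f ≠ ⊥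

/-- The degree-`i` term of the Koszul cochain complex on `ℓ` generators over `A`:
a free module on the `i`-element subsets of `Fin ℓ`. -/
abbrev KosTerm (A : Type) [CommRing A] (ℓ i : ℕ) : Type :=
  {s : Finset (Fin ℓ) // s.card = i} → A

/-- The Koszul cochain differential (for the sequence `x`), from degree `i`
to degree `i+1`. -/
def kosD (A : Type) [CommRing A] {ℓ : ℕ} (x : Fin ℓ → A) (i : ℕ) :
    KosTerm A ℓ i →ₗ[A] KosTerm A ℓ (i + 1) where
  toFun f T := ∑ t ∈ T.1.attach,
    ((-1 : A) ^ ((T.1.filter (fun s => s < t.1)).card) * x t.1) •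
      f ⟨T.1.erase t.1, by
        rw [Finset.card_erase_of_mem t.2, T.2]; omega⟩
  map_add' f g := by
    funext T
    simp [mul_add, Finset.sum_add_distrib]
  map_smul' a f := by
    funext T
    rw [RingHom.id_apply]
    simp only [Pi.smul_apply, smul_eq_mul, Finset.mul_sum]
    exact Finset.sum_congr rfl fun t _ => by ring

/-- `S_k(x; A)`: the cokernel of the `(k-1)`-st differential of the Koszul cochain
complex of the sequence `x` (with `S_0 = A`). -/
def KosCoker (A : Type) [CommRing A] {ℓ : ℕ} (x : Fin ℓ → A) : ℕ → Type
  | 0 => A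
  | m + 1 => KosTerm A ℓ (m + 1) ⧸ LinearMap.range (kosD A x m)

instance kosCokerAddCommGroup (A : Type) [CommRing A] {ℓ : ℕ} (x : Fin ℓ → A) :
    (k : ℕ) → AddCommGroup (KosCoker A x k)
  | 0 => inferInstanceAs (AddCommGroup A)
  | m + 1 => inferInstanceAs
      (AddCommGroup (KosTerm A ℓ (m + 1) ⧸ LinearMap.range (kosD A x m)))

instance kosCokerModule (A : Type) [CommRing A] {ℓ : ℕ} (x : Fin ℓ → A) :
    (k : ℕ) → Module A (KosCoker A x k)
  | 0 => inferInstanceAs (Module A A)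
  | m + 1 => inferInstanceAs
      (Module A (KosTerm A ℓ (m + 1) ⧸ LinearMap.range (kosD A x m)))

/-- The `R`-module structure on `S_k(x; A)` obtained by restriction of scalars. -/
instance kosCokerModule' (R A : Type) [CommRing R] [CommRing A] [Algebra R A]
    {ℓ : ℕ} (x : Fin ℓ → A) (k : ℕ) : Module R (KosCoker A x k) :=
  Module.compHom _ (algebraMap R A)

/-- The left Tor_1-orthogonal class. -/
def torLeft1 (R : Type) [CommRing R] (𝒳 : Set (ModuleCat.{0} R)) : Set (ModuleCat.{0} R) :=
  {M | ∀ X ∈ 𝒳, torV R M X 1}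

/-- The right Tor_1-orthogonal class. -/
def torRight1 (R : Type) [CommRing R] (𝒳 : Set (ModuleCat.{0} R)) : Set (ModuleCat.{0} R) :=
  {M | ∀ X ∈ 𝒳, torV R X M 1}

/-- A Tor-pair. -/
def IsTorPair (R : Type) [CommRing R] (ℰ 𝒞 : Set (ModuleCat.{0} R)) : Prop :=
  ℰ = torLeft1 R 𝒞 ∧ 𝒞 = torRight1 R ℰ

/-- A hereditary Tor-pair. -/
def IsHereditaryTorPair (R : Type) [CommRing R] (ℰ 𝒞 : Set (ModuleCat.{0} R)) : Prop :=
  IsTorPair R ℰ 𝒞 ∧ ∀ X ∈ ℰ, ∀ Y ∈ 𝒞, ∀ i : ℕ, 1 ≤ i → torV R X Y i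

/-- The class `𝒞_(i) = {M ∣ Tor_j(E, M) = 0 for all j > i, E ∈ ℰ}`. -/
def torShift (R : Type) [CommRing R] (ℰ : Set (ModuleCat.{0} R)) (i : ℕ) :
    Set (ModuleCat.{0} R) :=
  {M | ∀ X ∈ ℰ, ∀ j : ℕ, i < j → torV R X M j}

/-- The residue field `k(p)` of `R_p` as an `R`-module. -/
abbrev resField (R : Type) [CommRing R] (p : PrimeSpectrum R) : Type :=
  LocalizedModule p.asIdeal.primeCompl (R ⧸ p.asIdeal)

/-- The generating set `𝒮_φ = {S_{φ(p)}(pR_p; R_p) ∣ p ∈ Spec R}` (closed under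
isomorphism, over all choices of finite generating sets of `pR_p`). -/
def SphiSet (R : Type) [CommRing R] (φ : PrimeSpectrum R → ℕ) : Set (ModuleCat.{0} R) :=
  {X | ∃ (p : PrimeSpectrum R) (ℓ : ℕ) (x : Fin ℓ → Localization.AtPrime p.asIdeal),
    Ideal.span (Set.range x) =
      Ideal.map (algebraMap R (Localization.AtPrime p.asIdeal)) p.asIdeal ∧
    Nonempty (X ≅ ModuleCat.of R (KosCoker (Localization.AtPrime p.asIdeal) x (φ p)))}


theorem tor_iff (R : Type) [CommRing R] (X M : ModuleCat.{0} R) (P : ProjectiveResolution M) (j : ℕ) :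
    torV R X M (j+1) ↔ Function.Exact ((P.complex.d (j+2) (j+1)).hom.lTensor X)
      ((P.complex.d (j+1) j).hom.lTensor X) := by
  unfold torV
  have e := P.isoLeftDerivedObj ((MonoidalCategory.tensoringLeft (ModuleCat R)).obj X) (j+1)
  rw [show Subsingleton (((Tor (ModuleCat.{0} R) (j+1)).obj X).obj M) ↔ Limits.IsZero (((Tor (ModuleCat.{0} R) (j+1)).obj X).obj M) from ⟨fun h => ModuleCat.isZero_of_subsingleton _, fun h => ModuleCat.subsingleton_of_isZero h⟩]
  refine (Iso.isZero_iff e).trans ?_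
  erw [← HomologicalComplex.exactAt_iff_isZero_homology]
  rw [HomologicalComplex.exactAt_iff' _ (j+2) (j+1) j (by simp) (by simp)]
  rw [ShortComplex.ShortExact.moduleCat_exact_iff_function_exact]
  rfl

theorem ext_iff_succ (R : Type) [CommRing R] (X M : ModuleCat.{0} R) (P : ProjectiveResolution X) (j : ℕ) :
    extV R X M (j+1) ↔ ∀ f : P.complex.X (j+1) →ₗ[R] M, f ∘ₗ (P.complex.d (j+2) (j+1)).hom = 0 →
      ∃ g : P.complex.X j →ₗ[R] M, g ∘ₗ (P.complex.d (j+1) j).hom = f := by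
  unfold extV
  have e := P.isoExt (R := ℤ) (j+1) M
  rw [show Subsingleton (((_root_.Ext ℤ (ModuleCat.{0} R) (j+1)).obj (op X)).obj M) ↔ Limits.IsZero (((_root_.Ext ℤ (ModuleCat.{0} R) (j+1)).obj (op X)).obj M) from ⟨fun h => ModuleCat.isZero_of_subsingleton _, fun h => ModuleCat.subsingleton_of_isZero h⟩]
  rw [Iso.isZero_iff e]
  rw [← HomologicalComplex.exactAt_iff_isZero_homology]
  rw [HomologicalComplex.exactAt_iff' _ j (j+1) (j+2) (by simp) (by simp)]
  rw [ShortComplex.moduleCat_exact_iff]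
  constructor
  · intro h f hf
    obtain ⟨g, hg⟩ := h (ModuleCat.ofHom f) (by
      change P.complex.d (j+2) (j+1) ≫ ModuleCat.ofHom f = 0
      ext1; exact hf)
    refine ⟨ModuleCat.Hom.hom g, ?_⟩
    change P.complex.d (j+1) j ≫ g = ModuleCat.ofHom f at hg
    exact congrArg ModuleCat.Hom.hom hg
  · intro h f hf
    obtain ⟨g, hg⟩ := h (ModuleCat.Hom.hom f) (by
      change P.complex.d (j+2) (j+1) ≫ f = 0 at hf
      exact congrArg ModuleCat.Hom.hom hf)
    refine ⟨ModuleCat.ofHom g, ?_⟩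
    change P.complex.d (j+1) j ≫ ModuleCat.ofHom g = f
    ext1; exact hg

theorem ext_iff_zero (R : Type) [CommRing R] (X M : ModuleCat.{0} R) (P : ProjectiveResolution X) :
    extV R X M 0 ↔ ∀ f : P.complex.X 0 →ₗ[R] M, f ∘ₗ (P.complex.d 1 0).hom = 0 → f = 0 := by
  unfold extV
  have e := P.isoExt (R := ℤ) 0 M
  rw [show Subsingleton (((_root_.Ext ℤ (ModuleCat.{0} R) 0).obj (op X)).obj M) ↔ Limits.IsZero (((_root_.Ext ℤ (ModuleCat.{0} R) 0).obj (op X)).obj M) from ⟨fun h => ModuleCat.isZero_of_subsingleton _, fun h => ModuleCat.subsingleton_of_isZero h⟩]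
  rw [Iso.isZero_iff e]
  rw [← HomologicalComplex.exactAt_iff_isZero_homology]
  rw [HomologicalComplex.exactAt_iff' _ 0 0 1 (by simp) (by simp)]
  rw [ShortComplex.moduleCat_exact_iff]
  have h0 : P.complex.d 0 0 = 0 := P.complex.shape 0 0 (by simp)
  constructor
  · intro h f hf
    obtain ⟨g, hg⟩ := h (ModuleCat.ofHom f) (by
      change P.complex.d 1 0 ≫ ModuleCat.ofHom f = 0
      ext1; exact hf)
    have hg' : P.complex.d 0 0 ≫ (show P.complex.X 0 ⟶ M from g) = ModuleCat.ofHom f := hg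
    have h1 : P.complex.d 0 0 ≫ (show P.complex.X 0 ⟶ M from g) = 0 := by
      rw [h0]; exact Limits.zero_comp
    exact (congrArg ModuleCat.Hom.hom (h1.symm.trans hg')).symm
  · intro h f hf
    have hg := h (ModuleCat.Hom.hom f) (by
      change P.complex.d 1 0 ≫ f = 0 at hf
      exact congrArg ModuleCat.Hom.hom hf)
    refine ⟨(0 : P.complex.X 0 ⟶ M), ?_⟩
    change P.complex.d 0 0 ≫ 0 = f
    ext1; rw [hg]; rw [Limits.comp_zero]; rfl

theorem res_exact (R : Type) [CommRing R] (M : ModuleCat.{0} R) (P : ProjectiveResolution M) (j : ℕ) :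
    Function.Exact (P.complex.d (j+2) (j+1)).hom (P.complex.d (j+1) j).hom := by
  have := P.exact_succ j
  rw [ShortComplex.ShortExact.moduleCat_exact_iff_function_exact] at this
  exact this

theorem res_exact0 (R : Type) [CommRing R] (M : ModuleCat.{0} R) (P : ProjectiveResolution M)  :
    ∃ π : P.complex.X 0 →ₗ[R] M, Function.Surjective π ∧ Function.Exact (P.complex.d 1 0).hom π := by
  refine ⟨(P.π.f 0).hom, (ModuleCat.epi_iff_surjective (P.π.f 0)).1 inferInstance, ?_⟩
  have := P.exact₀
  rw [ShortComplex.ShortExact.moduleCat_exact_iff_function_exact] at this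
  exact this

theorem res_proj (R : Type) [CommRing R] (M : ModuleCat.{0} R) (P : ProjectiveResolution M) (j : ℕ) :
    Module.Projective R (P.complex.X j) :=
  (IsProjective.iff_projective (R := R) (P.complex.X j)).2 (P.projective j)


section chase
variable {R : Type} [CommRing R] {A0 A1 A2 B0 B1 B2 B3 C0 C1 C2 C3 : Type}
  [AddCommGroup A0] [Module R A0] [AddCommGroup A1] [Module R A1] [AddCommGroup A2] [Module R A2]
  [AddCommGroup B0] [Module R B0] [AddCommGroup B1] [Module R B1] [AddCommGroup B2] [Module R B2]
  [AddCommGroup B3] [Module R B3]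
  [AddCommGroup C0] [Module R C0] [AddCommGroup C1] [Module R C1] [AddCommGroup C2] [Module R C2]
  [AddCommGroup C3] [Module R C3]

theorem chase_one {a1 : A1 →ₗ[R] A0} {a2 : A2 →ₗ[R] A1} {b1 : B1 →ₗ[R] B0} {b2 : B2 →ₗ[R] B1}
    {b3 : B3 →ₗ[R] B2} {c2 : C2 →ₗ[R] C1} {c3 : C3 →ₗ[R] C2}
    {i0 : A0 →ₗ[R] B0} {i1 : A1 →ₗ[R] B1} {i2 : A2 →ₗ[R] B2}
    {p1 : B1 →ₗ[R] C1} {p2 : B2 →ₗ[R] C2} {p3 : B3 →ₗ[R] C3}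
    (hi0 : Function.Injective i0) (hi1 : Function.Injective i1)
    (e1 : Function.Exact i1 p1) (e2 : Function.Exact i2 p2)
    (s2 : Function.Surjective p2) (s3 : Function.Surjective p3)
    (ai1 : ∀ x, i0 (a1 x) = b1 (i1 x)) (ai2 : ∀ x, i1 (a2 x) = b2 (i2 x))
    (bp2 : ∀ x, p1 (b2 x) = c2 (p2 x)) (bp3 : ∀ x, p2 (b3 x) = c3 (p3 x))
    (aa : ∀ x, a1 (a2 x) = 0) (cc : ∀ x, c2 (c3 x) = 0)
    (eb1 : Function.Exact b2 b1) (eb2 : Function.Exact b3 b2) :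
    Function.Exact c3 c2 ↔ Function.Exact a2 a1 := by
  constructor
  · intro h a
    constructor
    · intro ha
      obtain ⟨b, hb⟩ := (eb1 (i1 a)).1 (by rw [← ai1, ha, map_zero])
      obtain ⟨c, hc⟩ := (h (p2 b)).1 (by rw [← bp2, hb]; exact (e1 _).2 ⟨a, rfl⟩)
      obtain ⟨y, rfl⟩ := s3 c
      obtain ⟨z, hz⟩ := (e2 (b - b3 y)).1 (by rw [map_sub, bp3, hc, sub_self])
      refine ⟨z, hi1 ?_⟩
      rw [ai2, hz, map_sub, hb, (eb2 _).2 ⟨y, rfl⟩, sub_zero]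
    · rintro ⟨x, rfl⟩; exact aa x
  · intro h c
    constructor
    · intro hc
      obtain ⟨b, rfl⟩ := s2 c
      obtain ⟨a, ha⟩ := (e1 (b2 b)).1 (by rw [bp2, hc])
      obtain ⟨z, hz⟩ := (h a).1 (hi0 (by rw [ai1, ha, map_zero]; exact (eb1 _).2 ⟨b, rfl⟩))
      obtain ⟨y, hy⟩ := (eb2 (b - i2 z)).1 (by rw [map_sub, ← ai2, hz, ha, sub_self])
      refine ⟨p3 y, ?_⟩
      rw [← bp3, hy, map_sub, (e2 _).2 ⟨z, rfl⟩, sub_zero]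
    · rintro ⟨x, rfl⟩; exact cc x

/-- here `A0, B0` are the augmentations -/
theorem chase_two {a1 : A1 →ₗ[R] A0} {a2 : A2 →ₗ[R] A1} {b1 : B1 →ₗ[R] B0} {b2 : B2 →ₗ[R] B1}
    {b3 : B3 →ₗ[R] B2} {c2 : C2 →ₗ[R] C1} {c3 : C3 →ₗ[R] C2}
    {i0 : A0 →ₗ[R] B0} {i1 : A1 →ₗ[R] B1} {i2 : A2 →ₗ[R] B2}
    {p1 : B1 →ₗ[R] C1} {p2 : B2 →ₗ[R] C2} {p3 : B3 →ₗ[R] C3}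
    (hi1 : Function.Injective i1)
    (e1 : Function.Exact i1 p1) (e2 : Function.Exact i2 p2)
    (s2 : Function.Surjective p2) (s3 : Function.Surjective p3)
    (sa : Function.Surjective a1)
    (ai1 : ∀ x, i0 (a1 x) = b1 (i1 x)) (ai2 : ∀ x, i1 (a2 x) = b2 (i2 x))
    (bp2 : ∀ x, p1 (b2 x) = c2 (p2 x)) (bp3 : ∀ x, p2 (b3 x) = c3 (p3 x))
    (aa : Function.Exact a2 a1) (cc : ∀ x, c2 (c3 x) = 0)
    (eb1 : Function.Exact b2 b1) (eb2 : Function.Exact b3 b2) :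
    Function.Exact c3 c2 ↔ Function.Injective i0 := by
  constructor
  · intro h
    rw [injective_iff_map_eq_zero]
    intro x hx
    obtain ⟨a, rfl⟩ := sa x
    obtain ⟨b, hb⟩ := (eb1 (i1 a)).1 (by rw [← ai1, hx])
    obtain ⟨c, hc⟩ := (h (p2 b)).1 (by rw [← bp2, hb]; exact (e1 _).2 ⟨a, rfl⟩)
    obtain ⟨y, rfl⟩ := s3 c
    obtain ⟨z, hz⟩ := (e2 (b - b3 y)).1 (by rw [map_sub, bp3, hc, sub_self])
    refine (aa _).2 ⟨z, hi1 ?_⟩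
    rw [ai2, hz, map_sub, hb, (eb2 _).2 ⟨y, rfl⟩, sub_zero]
  · intro h c
    constructor
    · intro hc
      obtain ⟨b, rfl⟩ := s2 c
      obtain ⟨a, ha⟩ := (e1 (b2 b)).1 (by rw [bp2, hc])
      obtain ⟨z, hz⟩ := (aa a).1 (h (by rw [ai1, ha, map_zero]; exact (eb1 _).2 ⟨b, rfl⟩))
      obtain ⟨y, hy⟩ := (eb2 (b - i2 z)).1 (by rw [map_sub, ← ai2, hz, ha, sub_self])
      refine ⟨p3 y, ?_⟩
      rw [← bp3, hy, map_sub, (e2 _).2 ⟨z, rfl⟩, sub_zero]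
    · rintro ⟨x, rfl⟩; exact cc x
end chase

section tor
variable {R : Type} [CommRing R]

theorem lr_comm {X F P Q : Type} [AddCommGroup X] [Module R X] [AddCommGroup F] [Module R F]
    [AddCommGroup P] [Module R P] [AddCommGroup Q] [Module R Q] (f : X →ₗ[R] F) (d : P →ₗ[R] Q)
    (x : TensorProduct R X P) :
    f.rTensor Q (d.lTensor X x) = d.lTensor F (f.rTensor P x) := by
  rw [← LinearMap.comp_apply, ← LinearMap.comp_apply, LinearMap.rTensor_comp_lTensor,
    LinearMap.lTensor_comp_rTensor]

theorem lt_zero {X P Q S : Type} [AddCommGroup X] [Module R X] [AddCommGroup S] [Module R S]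
    [AddCommGroup P] [Module R P] [AddCommGroup Q] [Module R Q] (f : Q →ₗ[R] S) (d : P →ₗ[R] Q)
    (h : Function.Exact d f) (x : TensorProduct R X P) :
    f.lTensor X (d.lTensor X x) = 0 := by
  rw [← LinearMap.comp_apply, ← LinearMap.lTensor_comp, h.linearMap_comp_eq_zero]
  simp

theorem tor_shift_first {X' F X : Type} [AddCommGroup X] [Module R X] [AddCommGroup F] [Module R F]
    [AddCommGroup X'] [Module R X'] [Module.Flat R F] (i : X' →ₗ[R] F) (p : F →ₗ[R] X)
    (hi : Function.Injective i) (hp : Function.Surjective p) (h : Function.Exact i p)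
    (M : ModuleCat.{0} R) (j : ℕ) :
    torV R (ModuleCat.of R X) M (j+2) ↔ torV R (ModuleCat.of R X') M (j+1) := by
  let P := projectiveResolution M
  have hP := res_proj R M P
  rw [tor_iff R _ M P, tor_iff R _ M P]
  exact chase_one (i0 := i.rTensor _) (i1 := i.rTensor _) (i2 := i.rTensor _)
    (p1 := p.rTensor _) (p2 := p.rTensor _) (p3 := p.rTensor _)
    (Module.Flat.rTensor_preserves_injective_linearMap i hi)
    (Module.Flat.rTensor_preserves_injective_linearMap i hi)
    (rTensor_exact _ h hp) (rTensor_exact _ h hp)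
    (LinearMap.rTensor_surjective _ hp) (LinearMap.rTensor_surjective _ hp)
    (lr_comm i _) (lr_comm i _) (lr_comm p _) (lr_comm p _)
    (lt_zero _ _ (res_exact R M P _)) (lt_zero _ _ (res_exact R M P _))
    (Module.Flat.lTensor_exact F (res_exact R M P _))
    (Module.Flat.lTensor_exact F (res_exact R M P _))

theorem tor_one_iff {X' F X : Type} [AddCommGroup X] [Module R X] [AddCommGroup F] [Module R F]
    [AddCommGroup X'] [Module R X'] [Module.Flat R F] (i : X' →ₗ[R] F) (p : F →ₗ[R] X)
    (hi : Function.Injective i) (hp : Function.Surjective p) (h : Function.Exact i p)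
    (M : ModuleCat.{0} R) :
    torV R (ModuleCat.of R X) M 1 ↔ Function.Injective (i.rTensor M) := by
  let P := projectiveResolution M
  have hP := res_proj R M P
  obtain ⟨π, hπ, hπ'⟩ := res_exact0 R M P
  rw [tor_iff R _ M P]
  exact chase_two (i0 := i.rTensor _) (i1 := i.rTensor _) (i2 := i.rTensor _)
    (p1 := p.rTensor _) (p2 := p.rTensor _) (p3 := p.rTensor _)
    (Module.Flat.rTensor_preserves_injective_linearMap i hi)
    (rTensor_exact _ h hp) (rTensor_exact _ h hp)
    (LinearMap.rTensor_surjective _ hp) (LinearMap.rTensor_surjective _ hp)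
    (LinearMap.lTensor_surjective _ hπ)
    (lr_comm i _) (lr_comm i _) (lr_comm p _) (lr_comm p _)
    (lTensor_exact _ hπ' hπ) (lt_zero _ _ (res_exact R M P _))
    (lTensor_exact _ hπ' hπ)
    (Module.Flat.lTensor_exact F (res_exact R M P _))

theorem tor_flat (X : ModuleCat.{0} R) [Module.Flat R X] (M : ModuleCat.{0} R) (j : ℕ) :
    torV R X M (j+1) := by
  rw [tor_iff R _ M (projectiveResolution M)]
  exact Module.Flat.lTensor_exact X (res_exact R M _ _)

theorem tor_iso {X Y : ModuleCat.{0} R} (e : X ≅ Y) (M : ModuleCat.{0} R) (j : ℕ) :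
    torV R X M j ↔ torV R Y M j := by
  have e' := ((Tor (ModuleCat.{0} R) j).mapIso e).app M
  unfold torV
  exact (e'.toLinearEquiv).toEquiv.subsingleton_congr

theorem exists_cover (X : ModuleCat.{0} R) : ∃ (F : ModuleCat.{0} R) (p : F →ₗ[R] X),
    Module.Flat R F ∧ Function.Surjective p :=
  ⟨ModuleCat.of R (X →₀ R), Finsupp.linearCombination R id,
    inferInstanceAs (Module.Flat R (X →₀ R)), Finsupp.linearCombination_id_surjective R X⟩

theorem tor_syz (M : ModuleCat.{0} R) : ∃ M' : ModuleCat.{0} R, ∀ (j : ℕ) (X : ModuleCat.{0} R),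
    torV R X M (j+2) ↔ torV R X M' (j+1) := by
  let P := projectiveResolution M
  have hP := res_proj R M P
  obtain ⟨π, hπ, hπ'⟩ := res_exact0 R M P
  let M' := LinearMap.ker π
  refine ⟨ModuleCat.of R M', ?_⟩
  let q : P.complex.X 1 →ₗ[R] M' := (P.complex.d 1 0).hom.codRestrict M' (fun x => (hπ' _).2 ⟨x, rfl⟩)
  have hq : Function.Surjective q := by
    rintro ⟨y, hy⟩
    obtain ⟨x, rfl⟩ := (hπ' y).1 hy
    exact ⟨x, rfl⟩
  have hqe : Function.Exact (P.complex.d 2 1).hom q := by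
    intro x
    rw [← res_exact R M P 0 x]
    exact Subtype.ext_iff
  have B3 : ∀ X : ModuleCat.{0} R, torV R X M 1 ↔ Function.Injective (M'.subtype.lTensor X) := by
    intro X
    rw [tor_iff R _ M P]
    have h1 : ∀ z, (P.complex.d 1 0).hom.lTensor X z = M'.subtype.lTensor X (q.lTensor X z) := by
      intro z
      rw [← LinearMap.comp_apply, ← LinearMap.lTensor_comp]; rfl
    have h2 := lTensor_exact X hqe hq
    constructor
    · intro h
      rw [injective_iff_map_eq_zero]
      intro x hx
      obtain ⟨y, rfl⟩ := LinearMap.lTensor_surjective X hq x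
      exact (h2 y).2 ((h y).1 (by rw [← hx]; exact h1 y))
    · intro h y
      rw [← h2 y]
      constructor
      · intro hy; apply h; rw [map_zero, ← h1]; exact hy
      · intro hy; exact (h1 y).trans (by rw [hy, map_zero])
  intro j
  induction j with
  | zero =>
    intro X
    obtain ⟨F, p, hF, hp⟩ := exists_cover X
    have hex : Function.Exact (LinearMap.ker p).subtype p := LinearMap.exact_subtype_ker_map p
    have hi : Function.Injective (LinearMap.ker p).subtype := Subtype.val_injective
    have t1 := tor_shift_first (LinearMap.ker p).subtype p hi hp hex M 0
    have t2 := tor_one_iff (LinearMap.ker p).subtype p hi hp hex (ModuleCat.of R M')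
    refine t1.trans (Iff.trans ?_ t2.symm)
    refine (B3 _).trans ?_
    have i1 : Function.Injective (M'.subtype.lTensor F) :=
      Module.Flat.lTensor_preserves_injective_linearMap _ Subtype.val_injective
    have i2 : Function.Injective ((LinearMap.ker p).subtype.rTensor (P.complex.X 0)) :=
      Module.Flat.rTensor_preserves_injective_linearMap _ Subtype.val_injective
    rw [← i2.of_comp_iff, ← Function.Injective.of_comp_iff i1]
    refine iff_of_eq (congrArg _ (funext fun x => ?_))
    exact lr_comm _ _ x
  | succ j ih =>
    intro X
    obtain ⟨F, p, hF, hp⟩ := exists_cover X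
    have hex : Function.Exact (LinearMap.ker p).subtype p := LinearMap.exact_subtype_ker_map p
    have hi : Function.Injective (LinearMap.ker p).subtype := Subtype.val_injective
    have t1 := tor_shift_first (LinearMap.ker p).subtype p hi hp hex M (j+1)
    have t2 := tor_shift_first (LinearMap.ker p).subtype p hi hp hex (ModuleCat.of R M') j
    exact t1.trans ((ih _).trans t2.symm)

theorem tor_syz_iter (M : ModuleCat.{0} R) (i : ℕ) : ∃ M' : ModuleCat.{0} R,
    ∀ (j : ℕ) (X : ModuleCat.{0} R), torV R X M (j+1+i) ↔ torV R X M' (j+1) := by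
  induction i with
  | zero => exact ⟨M, fun _ _ => Iff.rfl⟩
  | succ i ih =>
    obtain ⟨N, hN⟩ := ih
    obtain ⟨N', hN'⟩ := tor_syz N
    refine ⟨N', fun j X => ?_⟩
    rw [← hN', ← hN (j+1), show j + 1 + 1 + i = j + 1 + (i + 1) by ring]
end tor


section kos
variable {A : Type} [CommRing A] {ℓ : ℕ}

/-- Koszul sign -/
def ksgn (A : Type) [CommRing A] {ℓ : ℕ} (t : Fin ℓ) (T : Finset (Fin ℓ)) : A :=
  (-1 : A) ^ ((T.filter (fun s => s < t)).card)

theorem ksgn_sq (t : Fin ℓ) (T : Finset (Fin ℓ)) : ksgn A t T * ksgn A t T = 1 := by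
  unfold ksgn
  rw [← pow_add, ← two_mul, pow_mul]; simp

theorem ksgn_erase_lt {t u : Fin ℓ} {T : Finset (Fin ℓ)} (hu : u ∈ T) (h : u < t) :
    ksgn A t (T.erase u) = - ksgn A t T := by
  unfold ksgn
  rw [Finset.filter_erase]
  have hm : u ∈ T.filter (fun s => s < t) := by simp [hu, h]
  rw [← Finset.card_erase_add_one hm, pow_succ]; ring

theorem ksgn_erase_ge {t u : Fin ℓ} {T : Finset (Fin ℓ)} (h : ¬ u < t) :
    ksgn A t (T.erase u) = ksgn A t T := by
  unfold ksgn
  rw [Finset.filter_erase, Finset.erase_eq_of_notMem]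
  simp [h]

theorem ksgn_key {t u : Fin ℓ} {T : Finset (Fin ℓ)} (ht : t ∈ T) (hu : u ∈ T) (h : t ≠ u) :
    ksgn A t T * ksgn A u (T.erase t) = - (ksgn A u T * ksgn A t (T.erase u)) := by
  rcases lt_or_gt_of_ne h with h | h
  · rw [ksgn_erase_lt ht h, ksgn_erase_ge (not_lt.2 h.le)]; ring
  · rw [ksgn_erase_lt hu h, ksgn_erase_ge (not_lt.2 h.le)]; ring

theorem ksgn_key' {t u : Fin ℓ} {T : Finset (Fin ℓ)} (ht : t ∈ T) (hu : u ∈ T) (h : t ≠ u) :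
    ksgn A t T * ksgn A u T = - (ksgn A u (T.erase t) * ksgn A t (T.erase u)) := by
  rcases lt_or_gt_of_ne h with h | h
  · rw [ksgn_erase_lt ht h, ksgn_erase_ge (not_lt.2 h.le)]; ring
  · rw [ksgn_erase_lt hu h, ksgn_erase_ge (not_lt.2 h.le)]; ring

variable (x : Fin ℓ → A) {M N : Type} [AddCommGroup M] [Module A M] [AddCommGroup N] [Module A N]

/-- total Koszul differential -/
def kD (M : Type) [AddCommGroup M] [Module A M] :
    (Finset (Fin ℓ) → M) →ₗ[A] (Finset (Fin ℓ) → M) where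
  toFun f T := ∑ t ∈ T, (ksgn A t T * x t) • f (T.erase t)
  map_add' f g := by
    funext T
    simp [Finset.sum_add_distrib]
  map_smul' a f := by
    funext T
    simp only [Pi.smul_apply, RingHom.id_apply, Finset.smul_sum]
    exact Finset.sum_congr rfl fun t _ => smul_comm _ _ _

theorem kD_apply (f : Finset (Fin ℓ) → M) (T : Finset (Fin ℓ)) :
    kD x M f T = ∑ t ∈ T, (ksgn A t T * x t) • f (T.erase t) := rfl

theorem kD_kD (f : Finset (Fin ℓ) → M) : kD x M (kD x M f) = 0 := by
  funext T
  rw [kD_apply]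
  simp only [kD_apply, Finset.smul_sum]
  rw [Finset.sum_sigma']
  refine Finset.sum_involution (fun a _ => ⟨a.2, a.1⟩) ?_ ?_ ?_ ?_
  · rintro ⟨t, u⟩ h
    simp only [Finset.mem_sigma, Finset.mem_erase] at h
    obtain ⟨ht, hut, hu⟩ := h
    simp only [smul_smul]
    rw [Finset.erase_right_comm (a := u) (b := t), ← add_smul]
    have := ksgn_key (A := A) ht hu hut.symm
    have e : ksgn A t T * x t * (ksgn A u (T.erase t) * x u) +
      ksgn A u T * x u * (ksgn A t (T.erase u) * x t) = 0 := by
      linear_combination (x t * x u) * this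
    rw [e, zero_smul]
  · rintro ⟨t, u⟩ h _ h2
    simp only [Finset.mem_sigma, Finset.mem_erase] at h
    simp only [Sigma.mk.injEq] at h2
    exact h.2.1 h2.1
  · rintro ⟨t, u⟩ h
    simp only [Finset.mem_sigma, Finset.mem_erase] at h ⊢
    exact ⟨h.2.2, h.2.1.symm, h.1⟩
  · rintro ⟨t, u⟩ h
    rfl

theorem kD_comp (φ : M →ₗ[A] N) (f : Finset (Fin ℓ) → M) :
    kD x N (fun T => φ (f T)) = fun T => φ (kD x M f T) := by
  funext T
  simp [kD_apply]

/-- contracting homotopy -/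
def kH (A : Type) [CommRing A] {M : Type} [AddCommGroup M] [Module A M] (i : Fin ℓ)
    (f : Finset (Fin ℓ) → M) : Finset (Fin ℓ) → M := fun S =>
  if i ∈ S then 0 else ksgn A i (insert i S) • f (insert i S)

theorem kH_homotopy (i : Fin ℓ) (f : Finset (Fin ℓ) → M) (hf : kD x M f = 0) :
    kD x M (kH A i f) = fun S => x i • f S := by
  funext S
  by_cases hi : i ∈ S
  · rw [kD_apply, Finset.sum_eq_single i]
    · simp only [kH, Finset.notMem_erase, if_false, Finset.insert_erase hi, smul_smul]
      congr 1
      linear_combination (x i) * ksgn_sq (A := A) i S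
    · intro t ht hti
      simp [kH, hi, hti.symm]
    · exact fun h => absurd hi h
  · have h0 := congrFun hf (insert i S)
    rw [kD_apply, Finset.sum_insert hi, Finset.erase_insert hi] at h0
    have h1 := congrArg (fun m => ksgn A i (insert i S) • m) h0
    simp only [smul_add, smul_smul, Finset.smul_sum, Pi.zero_apply, smul_zero] at h1
    rw [← mul_assoc, ksgn_sq, one_mul] at h1
    refine Eq.trans ?_ (eq_neg_of_add_eq_zero_left h1).symm
    rw [kD_apply, ← Finset.sum_neg_distrib]
    refine Finset.sum_congr rfl fun t ht => ?_
    have hti : t ≠ i := fun h => hi (h ▸ ht)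
    have hit : i ∉ S.erase t := fun h => hi (Finset.mem_of_mem_erase h)
    simp only [kH, hit, if_false]
    have key := ksgn_key' (A := A) (T := insert i S) (t := i) (u := t)
      (Finset.mem_insert_self _ _) (Finset.mem_insert_of_mem ht) hti.symm
    rw [Finset.erase_insert hi, Finset.erase_insert_of_ne hti.symm] at key
    rw [smul_smul, Finset.erase_insert_of_ne hti.symm, ← neg_smul]
    congr 1
    linear_combination (x t) * key

/-- supported in degree `j` -/
def kSup (j : ℕ) (f : Finset (Fin ℓ) → M) : Prop := ∀ T, T.card ≠ j → f T = 0

/-- truncation -/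
def kTr (j : ℕ) (f : Finset (Fin ℓ) → M) : Finset (Fin ℓ) → M := fun T => if T.card = j then f T else 0

theorem kTr_sup (j : ℕ) (f : Finset (Fin ℓ) → M) : kSup j (kTr j f) := fun T h => by simp [kTr, h]

theorem kTr_eq {j : ℕ} {f : Finset (Fin ℓ) → M} (h : kSup j f) : kTr j f = f := by
  funext T
  by_cases hT : T.card = j
  · simp [kTr, hT]
  · simp [kTr, hT, h T hT]

theorem kD_tr (j : ℕ) (f : Finset (Fin ℓ) → M) : kD x M (kTr j f) = kTr (j+1) (kD x M f) := by
  funext T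
  by_cases hT : T.card = j + 1
  · simp only [kTr, hT, if_true, kD_apply]
    refine Finset.sum_congr rfl fun t ht => ?_
    rw [if_pos (by rw [Finset.card_erase_of_mem ht, hT]; rfl)]
  · simp only [kTr, hT, if_false, kD_apply]
    refine Finset.sum_eq_zero fun t ht => ?_
    rw [if_neg, smul_zero]
    intro h
    apply hT
    rw [← h, Finset.card_erase_add_one ht]

/-- Koszul cohomology vanishing in degree `j` -/
def KosEx (M : Type) [AddCommGroup M] [Module A M] (j : ℕ) : Prop :=
  ∀ f : Finset (Fin ℓ) → M, kSup j f → kD x M f = 0 → ∃ g, kD x M g = f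

theorem kosEx_zero : KosEx x M 0 ↔ ∀ m : M, (∀ i, x i • m = 0) → m = 0 := by
  constructor
  · intro h m hm
    obtain ⟨g, hg⟩ := h (fun T => if T = ∅ then m else 0) (fun T hT => by
      refine if_neg ?_; rintro rfl; exact hT rfl) (by
      funext T
      rw [kD_apply]
      refine Finset.sum_eq_zero fun t ht => ?_
      split_ifs
      · rw [mul_smul, hm, smul_zero]
      · rw [smul_zero])
    have := congrFun hg ∅
    simpa [kD_apply] using this.symm
  · intro h f hf hd
    refine ⟨0, ?_⟩
    have : f ∅ = 0 := by
      apply h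
      intro i
      have h0 := congrFun hd {i}
      rw [kD_apply, Finset.sum_singleton, mul_smul] at h0
      have h1 := congrArg (fun m => ksgn A i {i} • m) h0
      simpa [smul_smul, ← mul_assoc, ksgn_sq] using h1
    rw [map_zero]
    funext T
    by_cases hT : T = ∅
    · rw [hT, this]; rfl
    · exact (hf T (by simpa using hT)).symm

theorem kosEx_shift {E : Type} [AddCommGroup E] [Module A E] (i : M →ₗ[A] E) (p : E →ₗ[A] N)
    (hi : Function.Injective i) (hp : Function.Surjective p) (h : Function.Exact i p)
    (hE : ∀ j, KosEx x E j) (j : ℕ) : KosEx x N j ↔ KosEx x M (j+1) := by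
  have lift : ∀ g : Finset (Fin ℓ) → N, ∃ g' : Finset (Fin ℓ) → E, (fun T => p (g' T)) = g := by
    intro g
    choose g' hg' using fun T => hp (g T)
    exact ⟨g', funext hg'⟩
  have fac : ∀ g : Finset (Fin ℓ) → E, (∀ T, p (g T) = 0) → ∃ g' : Finset (Fin ℓ) → M,
      (fun T => i (g' T)) = g := by
    intro g hg
    choose g' hg' using fun T => (h (g T)).1 (hg T)
    exact ⟨g', funext hg'⟩
  have inj : ∀ g g' : Finset (Fin ℓ) → M, (fun T => i (g T)) = (fun T => i (g' T)) → g = g' :=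
    fun g g' hg => funext fun T => hi (congrFun hg T)
  have pi0 : ∀ m, p (i m) = 0 := fun m => (h _).2 ⟨m, rfl⟩
  constructor
  · intro hN f hf hd
    obtain ⟨g, hg⟩ := hE (j+1) (fun T => i (f T)) (fun T hT => by simp only [hf T hT, map_zero])
      (by rw [kD_comp, hd]; funext T; simp)
    have hg2 : kD x E (kTr j g) = fun T => i (f T) := by
      rw [kD_tr, hg]; exact kTr_eq fun T hT => by rw [hf T hT, map_zero]
    obtain ⟨k, hk⟩ := hN (fun T => p (kTr j g T)) (fun T hT => by simp only [kTr_sup j g T hT, map_zero])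
      (by rw [kD_comp, hg2]; funext T; exact pi0 _)
    obtain ⟨k', rfl⟩ := lift k
    rw [kD_comp] at hk
    obtain ⟨f', hf'⟩ := fac (kTr j g - kD x E k') (fun T => by
      rw [Pi.sub_apply, map_sub, congrFun hk T, sub_self])
    refine ⟨f', inj _ _ ?_⟩
    rw [← kD_comp, hf', map_sub, kD_kD, sub_zero, hg2]
  · intro hM f hf hd
    obtain ⟨f', hf'⟩ := lift f
    have hf2 : (fun T => p (kTr j f' T)) = f := by
      funext T
      by_cases hT : T.card = j
      · simp only [kTr, hT, if_true]; exact congrFun hf' T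
      · simp only [kTr, hT, if_false, map_zero]; exact (hf T hT).symm
    obtain ⟨u, hu⟩ := fac (kD x E (kTr j f')) (fun T => by
      have := kD_comp x p (kTr j f')
      rw [hf2, hd] at this
      exact (congrFun this T).symm)
    have hus : kSup (j+1) u := fun T hT => hi (by
      rw [map_zero]
      refine (congrFun hu T).trans ?_
      rw [kD_tr]; exact kTr_sup _ _ T hT)
    obtain ⟨v, hv⟩ := hM u hus (inj _ _ (by
      rw [← kD_comp, hu, kD_kD]; funext T; simp))
    have hv2 : kD x M (kTr j v) = u := by rw [kD_tr, hv, kTr_eq hus]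
    obtain ⟨w, hw⟩ := hE j (kTr j f' - fun T => i (kTr j v T)) (fun T hT => by
      rw [Pi.sub_apply, kTr_sup j f' T hT, kTr_sup j v T hT, map_zero, sub_zero])
      (by rw [map_sub, kD_comp, hv2, hu, sub_self])
    refine ⟨fun T => p (w T), ?_⟩
    rw [kD_comp, hw, ← hf2]
    funext T
    simp [pi0]

theorem kosEx_inv (i : Fin ℓ) (h : Function.Bijective (fun m : M => x i • m)) (j : ℕ) :
    KosEx x M j := by
  intro f _ hd
  let e : M ≃ₗ[A] M := LinearEquiv.ofBijective (LinearMap.lsmul A M (x i)) h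
  have hh := kH_homotopy x i f hd
  refine ⟨fun T => e.symm (kH A i f T), ?_⟩
  have := kD_comp x e.symm.toLinearMap (kH A i f)
  refine this.trans ?_
  rw [hh]
  funext T
  exact e.symm_apply_apply (f T)

theorem kosEx_pi {ι : Type} (E : ι → Type) [∀ i, AddCommGroup (E i)] [∀ i, Module A (E i)] (j : ℕ)
    (h : ∀ i, KosEx x (E i) j) : KosEx x (∀ i, E i) j := by
  intro f hf hd
  have : ∀ i, ∃ g, kD x (E i) g = fun T => f T i := fun i =>
    h i _ (fun T hT => by rw [hf T hT]; rfl) (by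
      have := kD_comp x (LinearMap.proj i : (∀ i, E i) →ₗ[A] E i) f
      refine this.trans ?_
      rw [hd]; funext T; simp)
  choose g hg using this
  refine ⟨fun T i => g i T, ?_⟩
  funext T i
  have := kD_comp x (LinearMap.proj i : (∀ i, E i) →ₗ[A] E i) (fun T i => g i T)
  refine (congrFun this T).symm.trans ?_
  exact congrFun (hg i) T

theorem kosEx_equiv (e : M ≃ₗ[A] N) (j : ℕ) (h : KosEx x M j) : KosEx x N j := by
  intro f hf hd
  obtain ⟨g, hg⟩ := h (fun T => e.symm (f T)) (fun T hT => by simp only [hf T hT, map_zero]) (by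
    refine (kD_comp x e.symm.toLinearMap f).trans ?_
    rw [hd]; funext T; simp)
  refine ⟨fun T => e (g T), (kD_comp x e.toLinearMap g).trans ?_⟩
  rw [hg]; funext T; simp

/-- add the last element -/
def kUp (S : Finset (Fin ℓ)) : Finset (Fin (ℓ+1)) := insert (Fin.last ℓ) (S.map Fin.castSuccEmb)

theorem kUp_last (S : Finset (Fin ℓ)) : Fin.last ℓ ∉ S.map Fin.castSuccEmb := by
  simp

theorem kUp_mem (S : Finset (Fin ℓ)) (t : Fin ℓ) : t.castSucc ∈ kUp S ↔ t ∈ S := by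
  rw [kUp, Finset.mem_insert, or_iff_right t.castSucc_ne_last]
  exact Finset.mem_map' Fin.castSuccEmb

theorem kUp_mem_last (S : Finset (Fin ℓ)) : Fin.last ℓ ∈ kUp S := Finset.mem_insert_self _ _

theorem kUp_card (S : Finset (Fin ℓ)) : (kUp S).card = S.card + 1 := by
  rw [kUp, Finset.card_insert_of_notMem (kUp_last S), Finset.card_map]

theorem kUp_erase (S : Finset (Fin ℓ)) (t : Fin ℓ) : (kUp S).erase t.castSucc = kUp (S.erase t) := by
  ext u
  refine Fin.lastCases ?_ (fun u => ?_) u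
  · simp [kUp_mem_last, t.castSucc_ne_last.symm]
  · simp [kUp_mem]

theorem kUp_sgn (S : Finset (Fin ℓ)) (t : Fin ℓ) : ksgn A t.castSucc (kUp S) = ksgn A t S := by
  unfold ksgn
  congr 1
  rw [kUp, Finset.filter_insert, if_neg (by simp [Fin.lt_def]), Finset.filter_map, Finset.card_map]
  rfl

theorem kUp_D (g : Finset (Fin (ℓ+1)) → M) (S : Finset (Fin ℓ)) :
    kD (Fin.snoc x 0 : Fin (ℓ+1) → A) M g (kUp S) = kD x M (fun S => g (kUp S)) S := by
  rw [kD_apply, kUp, Finset.sum_insert (kUp_last S), Finset.sum_map, kD_apply]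
  simp only [Fin.snoc_last, mul_zero, zero_smul, zero_add]
  refine Finset.sum_congr rfl fun t _ => ?_
  have h1 := kUp_erase S t
  have h2 := kUp_sgn (A := A) S t
  rw [← h1, ← h2]
  simp [kUp]

theorem kosEx_snoc (j : ℕ) (h : KosEx (Fin.snoc x 0 : Fin (ℓ+1) → A) M (j+1)) : KosEx x M j := by
  classical
  intro f hf hd
  have upinj : Function.Injective (kUp (ℓ := ℓ)) := by
    intro S S' h
    ext t
    have := congrArg (fun U => t.castSucc ∈ U) h
    simpa [kUp_mem] using this
  have upsurj : ∀ T : Finset (Fin (ℓ+1)), Fin.last ℓ ∈ T → ∃ S, kUp S = T := by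
    intro T hT
    refine ⟨Finset.univ.filter (fun i => i.castSucc ∈ T), ?_⟩
    ext u
    refine Fin.lastCases ?_ (fun u => ?_) u
    · simp [kUp_mem_last, hT]
    · simp [kUp_mem]
  let f' : Finset (Fin (ℓ+1)) → M := fun T => if h : ∃ S, kUp S = T then f h.choose else 0
  have f'up : ∀ S, f' (kUp S) = f S := by
    intro S
    have hS : ∃ S', kUp S' = kUp S := ⟨S, rfl⟩
    simp only [f', hS, dif_pos]
    congr 1
    exact upinj hS.choose_spec
  have f'0 : ∀ T, Fin.last ℓ ∉ T → f' T = 0 := by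
    intro T hT
    simp only [f']
    rw [dif_neg]
    rintro ⟨S, rfl⟩
    exact hT (Finset.mem_insert_self _ _)
  obtain ⟨g, hg⟩ := h f' (fun T hT => by
    by_cases hl : Fin.last ℓ ∈ T
    · obtain ⟨S, rfl⟩ := upsurj T hl
      rw [f'up]
      apply hf
      rw [kUp_card] at hT
      omega
    · exact f'0 T hl) (by
    funext T
    by_cases hl : Fin.last ℓ ∈ T
    · obtain ⟨S, rfl⟩ := upsurj T hl
      rw [kUp_D]
      simp only [f'up, hd]
      rfl
    · rw [kD_apply]
      refine Finset.sum_eq_zero fun t _ => ?_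
      rw [f'0 _ (fun h => hl (Finset.mem_of_mem_erase h)), smul_zero])
  refine ⟨fun S => g (kUp S), ?_⟩
  funext S
  rw [← kUp_D, hg, f'up]
end kos


theorem res_null (A : Type) [CommRing A] (X : ModuleCat.{0} A) (P : ProjectiveResolution X) (r : A)
    (hr : ∀ z : X, r • z = 0) : ∃ s : ∀ n, P.complex.X n →ₗ[A] P.complex.X (n+1),
      (∀ y, (P.complex.d 1 0).hom (s 0 y) = r • y) ∧
      (∀ n y, (P.complex.d (n+2) (n+1)).hom (s (n+1) y) + s n ((P.complex.d (n+1) n).hom y) = r • y) := by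
  have comm : (r • 𝟙 P.complex) ≫ P.π = 0 := by
    apply HomologicalComplex.to_single_hom_ext
    rw [Linear.smul_comp, Category.id_comp]
    ext y
    exact hr _
  let h := ProjectiveResolution.liftHomotopyZero (P := P) (Q := P) (r • 𝟙 P.complex) comm
  refine ⟨fun n => (h.hom n (n+1)).hom, ?_, ?_⟩
  · intro y
    have := h.comm 0
    rw [Homotopy.prevD_chainComplex, Homotopy.dNext_zero_chainComplex] at this
    have := congrArg (fun f => (ModuleCat.Hom.hom f) y) this
    simpa using this.symm
  · intro n y
    have := h.comm (n+1)
    rw [Homotopy.prevD_chainComplex, Homotopy.dNext_succ_chainComplex] at this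
    have := congrArg (fun f => (ModuleCat.Hom.hom f) y) this
    refine (add_comm _ _).trans ?_
    simpa using this.symm

section depth
variable {A : Type} [CommRing A] {ℓ : ℕ} (x : Fin ℓ → A)

theorem no_tors {M : Type} [AddCommGroup M] [Module A M] (h : ∀ m : M, (∀ i, x i • m = 0) → m = 0)
    (m : M) (hm : ∀ i, ∃ n : ℕ, x i ^ n • m = 0) : m = 0 := by
  let I : Ideal A := LinearMap.ker (LinearMap.toSpanSingleton A M m)
  have memI : ∀ a, a ∈ I ↔ a • m = 0 := fun a => by simp [I, LinearMap.mem_ker]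
  have hle : Ideal.span (Set.range x) ≤ I.radical := by
    rw [Ideal.span_le]
    rintro _ ⟨i, rfl⟩
    obtain ⟨n, hn⟩ := hm i
    exact ⟨n, (memI _).2 hn⟩
  obtain ⟨n, hn⟩ := Ideal.exists_pow_le_of_le_radical_of_fg hle
    (Submodule.fg_span (Set.finite_range x))
  induction n with
  | zero =>
    have : (1 : A) ∈ I := hn (by simp)
    simpa using (memI 1).1 this
  | succ n ih =>
    apply ih
    intro y hy
    rw [memI]
    apply h
    intro i
    rw [smul_smul, ← memI]
    apply hn
    rw [pow_succ, mul_comm (x i)]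
    exact Ideal.mul_mem_mul hy (Ideal.subset_span ⟨i, rfl⟩)

/-- dimension shifting property -/
def DShift (V : ModuleCat.{0} A → ℕ → Prop) : Prop :=
  (∀ M : ModuleCat.{0} A, V M 0 ↔ ∀ m : M, (∀ i, x i • m = 0) → m = 0) ∧
  (∀ (M N : ModuleCat.{0} A) (F : Fin ℓ → ModuleCat.{0} A) (i : M →ₗ[A] (∀ i, F i))
    (p : (∀ i, F i) →ₗ[A] N), Function.Injective i → Function.Surjective p → Function.Exact i p →
    (∀ k, Function.Bijective (fun m : F k => x k • m)) → ∀ j, V N j ↔ V M (j+1))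

theorem dshift_le {V W : ModuleCat.{0} A → ℕ → Prop} (hV : DShift x V) (hW : DShift x W) (n : ℕ) :
    ∀ M, (∀ j < n, V M j) → (∀ j < n, W M j) := by
  induction n with
  | zero => intro M _ j hj; omega
  | succ n ih =>
    intro M hM
    have h0 := (hV.1 M).1 (hM 0 (by omega))
    let F : Fin ℓ → ModuleCat.{0} A := fun i =>
      ModuleCat.of A (LocalizedModule (Submonoid.powers (x i)) M)
    let ι : M →ₗ[A] (∀ i, F i) := LinearMap.pi fun i =>
      LocalizedModule.mkLinearMap (Submonoid.powers (x i)) M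
    have hι : Function.Injective ι := by
      rw [injective_iff_map_eq_zero]
      intro m hm
      refine no_tors x h0 m fun i => ?_
      have h1 : LocalizedModule.mkLinearMap (Submonoid.powers (x i)) M m = 0 := congrFun hm i
      rw [IsLocalizedModule.eq_zero_iff (Submonoid.powers (x i))] at h1
      obtain ⟨⟨_, k, rfl⟩, hc⟩ := h1
      exact ⟨k, hc⟩
    have hbij : ∀ k, Function.Bijective (fun m : F k => x k • m) := by
      intro k
      have := IsLocalizedModule.map_units (LocalizedModule.mkLinearMap (Submonoid.powers (x k)) M)
        ⟨x k, Submonoid.mem_powers _⟩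
      rw [Module.End.isUnit_iff] at this
      exact this
    let N := ModuleCat.of A ((∀ i, F i) ⧸ LinearMap.range ι)
    let p : (∀ i, F i) →ₗ[A] N := (LinearMap.range ι).mkQ
    have hp : Function.Surjective p := Submodule.mkQ_surjective _
    have hex : Function.Exact ι p := LinearMap.exact_map_mkQ_range ι
    have sV := hV.2 M N F ι p hι hp hex hbij
    have sW := hW.2 M N F ι p hι hp hex hbij
    have := ih N (fun j hj => (sV j).2 (hM (j+1) (by omega)))
    intro j hj
    cases j with
    | zero => exact (hW.1 M).2 h0
    | succ j => exact (sW j).1 (this j (by omega))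

theorem dshift_kos : DShift x (fun M j => KosEx x M j) := by
  refine ⟨fun M => kosEx_zero x, fun M N F i p hi hp hex hF j => ?_⟩
  exact kosEx_shift x i p hi hp hex (fun j => kosEx_pi x _ j fun k => kosEx_inv x k (hF k) j) j

theorem dshift_ext [IsLocalRing A] (hx : Ideal.span (Set.range x) = IsLocalRing.maximalIdeal A) :
    DShift x (fun M j => extV A (ModuleCat.of A (IsLocalRing.ResidueField A)) M j) := by
  set X := ModuleCat.of A (IsLocalRing.ResidueField A) with hX
  have kill : ∀ i, ∀ z : X, x i • z = 0 := by
    intro i z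
    have hi : x i ∈ IsLocalRing.maximalIdeal A := hx ▸ Ideal.subset_span ⟨i, rfl⟩
    obtain ⟨a, rfl⟩ := Ideal.Quotient.mk_surjective (I := IsLocalRing.maximalIdeal A) z
    change (Ideal.Quotient.mk _ (x i * a)) = 0
    rw [Ideal.Quotient.eq_zero_iff_mem]
    exact Ideal.mul_mem_right _ _ hi
  let P := projectiveResolution X
  have hP := res_proj A X P
  obtain ⟨π, hπ, hπ'⟩ := res_exact0 A X P
  refine ⟨fun M => ?_, fun M N F i p hi hp hex hF => ?_⟩
  · beta_reduce
    rw [ext_iff_zero A X M P]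
    constructor
    · intro h m hm
      have hle : IsLocalRing.maximalIdeal A ≤ LinearMap.ker (LinearMap.toSpanSingleton A M m) := by
        rw [← hx, Ideal.span_le]
        rintro _ ⟨i, rfl⟩
        exact hm i
      let g : X →ₗ[A] M := Submodule.liftQ (IsLocalRing.maximalIdeal A) _ hle
      have h0 := h (g ∘ₗ π) (by rw [LinearMap.comp_assoc, hπ'.linearMap_comp_eq_zero, LinearMap.comp_zero])
      obtain ⟨y, hy⟩ := hπ (Submodule.Quotient.mk (p := IsLocalRing.maximalIdeal A) (1 : A))
      have h1 := LinearMap.congr_fun h0 y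
      rw [LinearMap.comp_apply, hy] at h1
      have h2 : g (Submodule.Quotient.mk (p := IsLocalRing.maximalIdeal A) (1 : A)) = (1 : A) • m := rfl
      rw [h2] at h1
      simpa using h1
    · intro h f hf
      ext y
      apply h
      intro i
      rw [← map_smul]
      obtain ⟨w, hw⟩ := (hπ' (x i • y)).1 (by rw [map_smul, kill])
      rw [← hw]
      exact LinearMap.congr_fun hf w
  · have E0 : ∀ f : P.complex.X 0 →ₗ[A] (∀ i, F i), f ∘ₗ (P.complex.d 1 0).hom = 0 → f = 0 := by
      intro f hf
      ext y k
      obtain ⟨s, hs, -⟩ := res_null A X P (x k) (kill k)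
      apply (hF k).1
      change x k • f y k = x k • 0
      rw [← Pi.smul_apply, ← map_smul, ← hs, smul_zero]
      exact congrFun (LinearMap.congr_fun hf (s 0 y)) k
    have E1 : ∀ j, ∀ f : P.complex.X (j+1) →ₗ[A] (∀ i, F i), f ∘ₗ (P.complex.d (j+2) (j+1)).hom = 0 →
      ∃ g : P.complex.X j →ₗ[A] (∀ i, F i), g ∘ₗ (P.complex.d (j+1) j).hom = f := by
      intro j f hf
      choose s hs hs' using fun k => res_null A X P (x k) (kill k)
      let e : ∀ k, F k ≃ₗ[A] F k := fun k => LinearEquiv.ofBijective (LinearMap.lsmul A (F k) (x k)) (hF k)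
      refine ⟨LinearMap.pi fun k => (e k).symm.toLinearMap ∘ₗ LinearMap.proj k ∘ₗ f ∘ₗ s k j, ?_⟩
      ext y k
      change (e k).symm (f (s k j ((P.complex.d (j+1) j).hom y)) k) = f y k
      rw [LinearEquiv.symm_apply_eq]
      change _ = x k • f y k
      rw [← Pi.smul_apply, ← map_smul, ← hs' k j y, map_add]
      rw [show f ((P.complex.d (j+2) (j+1)).hom (s k (j+1) y)) = 0 from LinearMap.congr_fun hf _, zero_add]
    have lift : ∀ n, ∀ g : P.complex.X n →ₗ[A] N, ∃ g' : P.complex.X n →ₗ[A] (∀ i, F i), p ∘ₗ g' = g :=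
      fun n g => Module.projective_lifting_property p g hp
    have fac : ∀ n, ∀ g : P.complex.X n →ₗ[A] (∀ i, F i), p ∘ₗ g = 0 →
        ∃ g' : P.complex.X n →ₗ[A] M, i ∘ₗ g' = g := by
      intro n g hg
      let e := LinearEquiv.ofInjective i hi
      refine ⟨e.symm.toLinearMap ∘ₗ g.codRestrict (LinearMap.range i)
        (fun y => (hex (g y)).1 (LinearMap.congr_fun hg y)), ?_⟩
      ext1 y
      have := e.apply_symm_apply (g.codRestrict (LinearMap.range i)
        (fun y => (hex (g y)).1 (LinearMap.congr_fun hg y)) y)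
      exact congrArg Subtype.val this
    have inj : ∀ n, ∀ g g' : P.complex.X n →ₗ[A] M, i ∘ₗ g = i ∘ₗ g' → g = g' :=
      fun n g g' h => LinearMap.ext fun y => hi (LinearMap.congr_fun h y)
    have pi0 : p ∘ₗ i = 0 := hex.linearMap_comp_eq_zero
    have dd : ∀ n, (P.complex.d (n+1) n).hom ∘ₗ (P.complex.d (n+2) (n+1)).hom = 0 := fun n =>
      (res_exact A X P n).linearMap_comp_eq_zero
    intro j
    cases j with
    | zero =>
      beta_reduce
      rw [ext_iff_zero A X N P, ext_iff_succ A X M P]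
      constructor
      · intro hN f hf
        obtain ⟨g, hg⟩ := E1 0 (i ∘ₗ f) (by rw [LinearMap.comp_assoc, hf, LinearMap.comp_zero])
        have h0 := hN (p ∘ₗ g) (by rw [LinearMap.comp_assoc, hg, ← LinearMap.comp_assoc, pi0, LinearMap.zero_comp])
        obtain ⟨f', rfl⟩ := fac 0 g h0
        exact ⟨f', inj _ _ _ (by rw [← hg, LinearMap.comp_assoc])⟩
      · intro hM f hf
        obtain ⟨f', rfl⟩ := lift 0 f
        obtain ⟨u, hu⟩ := fac 1 (f' ∘ₗ (P.complex.d 1 0).hom) (by rw [← LinearMap.comp_assoc, hf])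
        obtain ⟨v, hv⟩ := hM u (inj _ _ _ (by
          rw [← LinearMap.comp_assoc, hu, LinearMap.comp_assoc, dd, LinearMap.comp_zero, LinearMap.comp_zero]))
        have := E0 (f' - i ∘ₗ v) (by rw [LinearMap.sub_comp, LinearMap.comp_assoc, hv, hu, sub_self])
        rw [sub_eq_zero.1 this, ← LinearMap.comp_assoc, pi0, LinearMap.zero_comp]
    | succ j =>
      beta_reduce
      rw [ext_iff_succ A X N P, ext_iff_succ A X M P]
      constructor
      · intro hN f hf
        obtain ⟨g, hg⟩ := E1 (j+1) (i ∘ₗ f) (by rw [LinearMap.comp_assoc, hf, LinearMap.comp_zero])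
        obtain ⟨h, hh⟩ := hN (p ∘ₗ g) (by rw [LinearMap.comp_assoc, hg, ← LinearMap.comp_assoc, pi0, LinearMap.zero_comp])
        obtain ⟨h', rfl⟩ := lift j h
        obtain ⟨f', hf'⟩ := fac (j+1) (g - h' ∘ₗ (P.complex.d (j+1) j).hom) (by
          rw [LinearMap.comp_sub, ← LinearMap.comp_assoc, hh, sub_self])
        refine ⟨f', inj _ _ _ ?_⟩
        rw [← LinearMap.comp_assoc, hf', LinearMap.sub_comp, hg, LinearMap.comp_assoc, dd,
          LinearMap.comp_zero, sub_zero]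
      · intro hM f hf
        obtain ⟨f', rfl⟩ := lift (j+1) f
        obtain ⟨u, hu⟩ := fac (j+2) (f' ∘ₗ (P.complex.d (j+2) (j+1)).hom) (by rw [← LinearMap.comp_assoc, hf])
        obtain ⟨v, hv⟩ := hM u (inj _ _ _ (by
          rw [← LinearMap.comp_assoc, hu, LinearMap.comp_assoc, dd, LinearMap.comp_zero, LinearMap.comp_zero]))
        obtain ⟨w, hw⟩ := E1 j (f' - i ∘ₗ v) (by rw [LinearMap.sub_comp, LinearMap.comp_assoc, hv, hu, sub_self])
        refine ⟨p ∘ₗ w, ?_⟩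
        rw [LinearMap.comp_assoc, hw, LinearMap.comp_sub, ← LinearMap.comp_assoc, pi0, LinearMap.zero_comp, sub_zero]

theorem le_rdepth_iff [IsLocalRing A] (M : Type) [AddCommGroup M] [Module A M] (n : ℕ) :
    (n : ℕ∞) ≤ rdepth A M ↔ ∀ j < n, extV A (ModuleCat.of A (IsLocalRing.ResidueField A)) (ModuleCat.of A M) j := by
  unfold rdepth
  rw [le_sInf_iff]
  constructor
  · intro h j hj
    by_contra hc
    have := h j ⟨j, rfl, hc⟩
    rw [Nat.cast_le] at this
    omega
  · rintro h _ ⟨i, rfl, hi⟩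
    rw [Nat.cast_le]
    by_contra hc
    exact hi (h i (by omega))

theorem le_rdepth_iff_kos [IsLocalRing A] (hx : Ideal.span (Set.range x) = IsLocalRing.maximalIdeal A)
    (M : Type) [AddCommGroup M] [Module A M] (n : ℕ) :
    (n : ℕ∞) ≤ rdepth A M ↔ ∀ j < n, KosEx x M j := by
  rw [le_rdepth_iff]
  exact ⟨dshift_le x (dshift_ext x hx) (dshift_kos x) n (ModuleCat.of A M),
    dshift_le x (dshift_kos x) (dshift_ext x hx) n (ModuleCat.of A M)⟩
end depth


section five
variable {A : Type} [CommRing A] {ℓ : ℕ} (x : Fin ℓ → A)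

theorem kosD_restr (i : ℕ) (g : Finset (Fin ℓ) → A) (T : {s : Finset (Fin ℓ) // s.card = i + 1}) :
    kosD A x i (fun S => g S.1) T = kD x A g T.1 := by
  rw [kD_apply]
  change ∑ t ∈ T.1.attach, ((-1 : A) ^ ((T.1.filter (fun s => s < t.1)).card) * x t.1) • g (T.1.erase t.1) = _
  rw [Finset.sum_attach T.1 (fun t => ((-1 : A) ^ ((T.1.filter (fun s => s < t)).card) * x t) • g (T.1.erase t))]
  rfl

/-- extension by zero -/
def kExt {M : Type} [Zero M] (i : ℕ) (f : {s : Finset (Fin ℓ) // s.card = i} → M) : Finset (Fin ℓ) → M :=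
  fun T => if h : T.card = i then f ⟨T, h⟩ else 0

theorem kExt_restr {M : Type} [Zero M] (i : ℕ) (f : {s : Finset (Fin ℓ) // s.card = i} → M)
    (T : {s : Finset (Fin ℓ) // s.card = i}) : kExt i f T.1 = f T := by
  simp [kExt, T.2]

theorem kosD_ext (i : ℕ) (f : KosTerm A ℓ i) (T : {s : Finset (Fin ℓ) // s.card = i + 1}) :
    kosD A x i f T = kD x A (kExt i f) T.1 := by
  rw [← kosD_restr, show (fun S : {s : Finset (Fin ℓ) // s.card = i} => kExt i f S.1) = f from
    funext fun S => kExt_restr i f S]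

theorem kD_empty {M : Type} [AddCommGroup M] [Module A M] (g : Finset (Fin ℓ) → M) : kD x M g ∅ = 0 := by
  rw [kD_apply]; simp

variable (R : Type) [CommRing R] [Algebra R A]

theorem kosP (k : ℕ) : ∃ p : KosTerm A ℓ k →ₗ[R] KosCoker A x k, Function.Surjective p ∧
    ∀ f, p f = 0 ↔ ∃ g : Finset (Fin ℓ) → A, ∀ T, kD x A g T.1 = f T := by
  cases k with
  | zero =>
    refine ⟨{ toFun := fun f => (f ⟨∅, rfl⟩ : A), map_add' := fun _ _ => rfl, map_smul' := ?_ }, ?_, ?_⟩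
    · intro r f
      exact Algebra.smul_def r (f ⟨∅, rfl⟩)
    · intro a
      exact ⟨fun _ => a, rfl⟩
    · intro f
      constructor
      · intro h
        refine ⟨0, fun T => ?_⟩
        obtain ⟨T, hT⟩ := T
        obtain rfl := Finset.card_eq_zero.1 hT
        rw [map_zero]
        exact h.symm
      · rintro ⟨g, hg⟩
        have := hg ⟨∅, rfl⟩
        rw [kD_empty] at this
        exact this.symm
  | succ m =>
    refine ⟨{ toFun := fun f => (Submodule.Quotient.mk f : KosTerm A ℓ (m + 1) ⧸ LinearMap.range (kosD A x m)),
              map_add' := fun _ _ => rfl, map_smul' := ?_ }, ?_, ?_⟩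
    · intro r f
      have : r • f = algebraMap R A r • f := (algebraMap_smul A r f).symm
      rw [this]
      rfl
    · intro a
      exact Submodule.Quotient.mk_surjective (LinearMap.range (kosD A x m)) a
    · intro f
      refine (Submodule.Quotient.mk_eq_zero (LinearMap.range (kosD A x m)) (x := f)).trans ?_
      constructor
      · rintro ⟨h, rfl⟩
        exact ⟨kExt m h, fun T => (kosD_ext x m h T).symm⟩
      · rintro ⟨g, hg⟩
        exact ⟨fun S => g S.1, funext fun T => (kosD_restr x m g T).trans (hg T)⟩

/-- restriction of the total differential -/
def kQ (i : ℕ) : (Finset (Fin ℓ) → A) →ₗ[R] KosTerm A ℓ i :=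
  LinearMap.funLeft R A (fun S : {s : Finset (Fin ℓ) // s.card = i} => S.1) ∘ₗ (kD x A).restrictScalars R

theorem kD_ext_zero {M : Type} [AddCommGroup M] [Module A M] (i : ℕ) (f : {s : Finset (Fin ℓ) // s.card = i} → M)
    (h : ∀ T : {s : Finset (Fin ℓ) // s.card = i + 1}, kD x M (kExt i f) T.1 = 0) : kD x M (kExt i f) = 0 := by
  have hs : kSup i (kExt i f) := fun T hT => by simp [kExt, hT]
  rw [← kTr_eq hs, kD_tr]
  funext T
  unfold kTr
  split_ifs with hT
  · exact h ⟨T, hT⟩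
  · rfl

theorem kD_lift {M : Type} [AddCommGroup M] [Module A M] (i : ℕ) (f : Finset (Fin ℓ) → M) (hf : kSup i f)
    (g : Finset (Fin ℓ) → M) (h : ∀ T : {s : Finset (Fin ℓ) // s.card = i}, kD x M g T.1 = f T.1) :
    ∃ g, kD x M g = f := by
  cases i with
  | zero =>
    refine ⟨0, ?_⟩
    rw [map_zero]
    funext T
    by_cases hT : T.card = 0
    · obtain rfl := Finset.card_eq_zero.1 hT
      rw [← h ⟨∅, rfl⟩, kD_empty]; rfl
    · exact (hf T hT).symm
  | succ i =>
    refine ⟨kTr i g, ?_⟩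
    rw [kD_tr, ← kTr_eq hf]
    funext T
    unfold kTr
    split_ifs with hT
    · exact h ⟨T, hT⟩
    · rfl

theorem kosDelta (i : ℕ) (hA : KosEx x A i) : ∃ (q : KosTerm A ℓ i →ₗ[R] KosCoker A x i)
    (δ : KosCoker A x i →ₗ[R] KosTerm A ℓ (i+1)) (p : KosTerm A ℓ (i+1) →ₗ[R] KosCoker A x (i+1)),
    Function.Surjective q ∧ Function.Exact (kQ x R i) q ∧ δ ∘ₗ q = (kosD A x i).restrictScalars R ∧
    Function.Injective δ ∧ Function.Surjective p ∧ Function.Exact δ p := by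
  obtain ⟨q, hq, hq'⟩ := kosP x R i
  obtain ⟨p, hp, hp'⟩ := kosP x R (i+1)
  have hle : LinearMap.ker q ≤ LinearMap.ker ((kosD A x i).restrictScalars R) := by
    intro f hf
    obtain ⟨g, hg⟩ := (hq' f).1 hf
    have : f = fun S => kD x A g S.1 := funext fun T => (hg T).symm
    rw [LinearMap.mem_ker]
    funext T
    change kosD A x i f T = 0
    rw [this, kosD_restr, kD_kD]; rfl
  let δ : KosCoker A x i →ₗ[R] KosTerm A ℓ (i+1) :=
    (Submodule.liftQ (LinearMap.ker q) _ hle) ∘ₗ (q.quotKerEquivOfSurjective hq).symm.toLinearMap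
  have hδ : ∀ f, δ (q f) = kosD A x i f := by
    intro f
    have : (q.quotKerEquivOfSurjective hq).symm (q f) = Submodule.Quotient.mk f := by
      rw [LinearEquiv.symm_apply_eq]; rfl
    change (Submodule.liftQ (LinearMap.ker q) _ hle) ((q.quotKerEquivOfSurjective hq).symm (q f)) = _
    rw [this]; rfl
  refine ⟨q, δ, p, hq, ?_, LinearMap.ext hδ, ?_, hp, ?_⟩
  · intro f
    rw [hq']
    exact ⟨fun ⟨g, hg⟩ => ⟨g, funext hg⟩, fun ⟨g, hg⟩ => ⟨g, congrFun hg⟩⟩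
  · rw [injective_iff_map_eq_zero]
    intro z hz
    obtain ⟨f, rfl⟩ := hq z
    rw [hδ] at hz
    rw [hq']
    have h0 := kD_ext_zero x i f (fun T => by rw [← kosD_ext, hz]; rfl)
    obtain ⟨g, hg⟩ := hA (kExt i f) (fun T hT => by simp [kExt, hT]) h0
    exact ⟨g, fun T => by rw [hg, kExt_restr]⟩
  · intro f
    rw [hp']
    constructor
    · rintro ⟨g, hg⟩
      exact ⟨q (fun S => g S.1), by rw [hδ]; exact funext fun T => (kosD_restr x i g T).trans (hg T)⟩
    · rintro ⟨z, rfl⟩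
      obtain ⟨h, rfl⟩ := hq z
      rw [hδ]
      exact ⟨kExt i h, fun T => (kosD_ext x i h T).symm⟩

open TensorProduct

/-- the map a ↦ a ⊗ m -/
def tmk {M : Type} [AddCommGroup M] [Module R M] (m : M) : A →ₗ[A] (A ⊗[R] M) where
  toFun a := a ⊗ₜ m
  map_add' _ _ := TensorProduct.add_tmul _ _ m
  map_smul' _ _ := rfl

theorem tmk_apply {M : Type} [AddCommGroup M] [Module R M] (m : M) (a : A) :
    tmk R m a = a ⊗ₜ[R] m := rfl

theorem kQ_tens {M : Type} [AddCommGroup M] [Module R M] (i : ℕ) (z : (Finset (Fin ℓ) → A) ⊗[R] M)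
    (T : {s : Finset (Fin ℓ) // s.card = i}) :
    TensorProduct.piLeft R M (fun _ => A) ((kQ x R i).rTensor M z) T =
      kD x (A ⊗[R] M) (TensorProduct.piLeft R M (fun _ => A) z) T.1 := by
  induction z with
  | zero => simp
  | add a b ha hb => simp only [map_add, Pi.add_apply, ha, hb]
  | tmul f m =>
    have : TensorProduct.piLeft R M (fun _ => A) (f ⊗ₜ m) = fun S => tmk R m (f S) := by
      funext S; simp [tmk_apply]
    rw [this, kD_comp]
    simp [tmk_apply, kQ]

theorem kosD_tens {M : Type} [AddCommGroup M] [Module R M] (i : ℕ) (z : (KosTerm A ℓ i) ⊗[R] M)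
    (T : {s : Finset (Fin ℓ) // s.card = i + 1}) :
    TensorProduct.piLeft R M (fun _ => A) (((kosD A x i).restrictScalars R).rTensor M z) T =
      kD x (A ⊗[R] M) (kExt i (TensorProduct.piLeft R M (fun _ => A) z)) T.1 := by
  induction z with
  | zero =>
    have : kExt i (0 : {s : Finset (Fin ℓ) // s.card = i} → A ⊗[R] M) = 0 := by funext S; simp [kExt]
    simp only [map_zero, Pi.zero_apply, this]
  | add a b ha hb =>
    have : ∀ f g : {s : Finset (Fin ℓ) // s.card = i} → A ⊗[R] M, kExt i (f + g) = kExt i f + kExt i g := by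
      intro f g; funext S; simp only [kExt, Pi.add_apply]; split_ifs <;> simp
    simp only [map_add, Pi.add_apply, ha, hb, this]
  | tmul f m =>
    have : kExt i (TensorProduct.piLeft R M (fun _ => A) (f ⊗ₜ m)) = fun S => tmk R m (kExt i f S) := by
      funext S; simp only [kExt]; split_ifs <;> simp [tmk_apply]
    rw [this, kD_comp]
    beta_reduce
    rw [← kosD_ext]
    simp [tmk_apply]

theorem delta_inj {M : Type} [AddCommGroup M] [Module R M] (i : ℕ)
    (q : KosTerm A ℓ i →ₗ[R] KosCoker A x i)
    (δ : KosCoker A x i →ₗ[R] KosTerm A ℓ (i+1)) (hq : Function.Surjective q)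
    (hex : Function.Exact (kQ x R i) q) (hδ : δ ∘ₗ q = (kosD A x i).restrictScalars R) :
    Function.Injective (δ.rTensor M) ↔ KosEx x (A ⊗[R] M) i := by
  have hex' := rTensor_exact M hex hq
  have hq' := LinearMap.rTensor_surjective M hq
  have hδ' : ∀ z, δ.rTensor M (q.rTensor M z) = ((kosD A x i).restrictScalars R).rTensor M z := by
    intro z; rw [← hδ, LinearMap.rTensor_comp]; rfl
  let e := TensorProduct.piLeft R M (fun _ : {s : Finset (Fin ℓ) // s.card = i} => A)
  let e' := TensorProduct.piLeft R M (fun _ : Finset (Fin ℓ) => A)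
  let e1 := TensorProduct.piLeft R M (fun _ : {s : Finset (Fin ℓ) // s.card = i + 1} => A)
  constructor
  · intro h f hf h0
    let z := e.symm (fun S => f S.1)
    have hz : kExt i (e z) = f := by
      simp only [z, LinearEquiv.apply_symm_apply]
      funext T
      unfold kExt
      split_ifs with hT
      · rfl
      · exact (hf T hT).symm
    have : q.rTensor M z = 0 := by
      apply h
      rw [hδ', map_zero]
      apply e1.injective
      rw [map_zero]
      funext T
      refine (kosD_tens x R i z T).trans ?_
      change kD x _ (kExt i (e z)) T.1 = 0
      rw [hz, h0]; rfl
    obtain ⟨w, hw⟩ := (hex' z).1 this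
    refine kD_lift x i f hf (e' w) fun T => ?_
    refine (kQ_tens x R i w T).symm.trans ?_
    rw [hw]
    change e z T = _
    simp only [z, LinearEquiv.apply_symm_apply]
  · intro h
    rw [injective_iff_map_eq_zero]
    intro y hy
    obtain ⟨z, rfl⟩ := hq' y
    rw [hδ'] at hy
    rw [hex']
    have h0 := kD_ext_zero x i (e z) (fun T => by
      refine (kosD_tens x R i z T).symm.trans ?_
      rw [hy, map_zero]; rfl)
    obtain ⟨g, hg⟩ := h (kExt i (e z)) (fun T hT => by simp [kExt, hT]) h0
    refine ⟨e'.symm g, ?_⟩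
    apply e.injective
    funext T
    refine (kQ_tens x R i _ T).trans ?_
    change kD x _ (e' (e'.symm g)) T.1 = _
    rw [LinearEquiv.apply_symm_apply, hg, kExt_restr]

theorem kosTor_zero [Module.Flat R A] (M : ModuleCat.{0} R) (j : ℕ) :
    torV R (ModuleCat.of R (KosCoker A x 0)) M (j+1) := by
  let e : A ≃ₗ[R] KosCoker A x 0 :=
    { toFun := fun a => a, invFun := fun a => a, left_inv := fun _ => rfl, right_inv := fun _ => rfl,
      map_add' := fun _ _ => rfl, map_smul' := fun r a => Algebra.smul_def r a }
  have : Module.Flat R (KosCoker A x 0) := Module.Flat.of_linearEquiv e.symm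
  exact tor_flat (ModuleCat.of R (KosCoker A x 0)) M j

theorem kosTor [Module.Flat R A] (M : ModuleCat.{0} R) (k : ℕ) (hA : ∀ j < k, KosEx x A j) :
    (∀ j, k < j → torV R (ModuleCat.of R (KosCoker A x k)) M j) ∧
    (∀ a b, a + b + 1 = k → (torV R (ModuleCat.of R (KosCoker A x k)) M (a + 1) ↔ KosEx x (A ⊗[R] M) b)) := by
  induction k with
  | zero =>
    refine ⟨fun j hj => ?_, fun a b h => by omega⟩
    obtain ⟨j, rfl⟩ : ∃ i, j = i + 1 := ⟨j - 1, by omega⟩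
    exact kosTor_zero x R M j
  | succ k ih =>
    obtain ⟨h1, h2⟩ := ih (fun j hj => hA j (by omega))
    obtain ⟨q, δ, p, hq, hexq, hδ, hinj, hp, hex⟩ := kosDelta x R k (hA k (by omega))
    have : Module.Flat R (KosTerm A ℓ (k+1)) := Module.Flat.trans R A (KosTerm A ℓ (k+1))
    have hs := tor_shift_first δ p hinj hp hex M
    have ho := tor_one_iff δ p hinj hp hex M
    refine ⟨fun j hj => ?_, fun a b h => ?_⟩
    · obtain ⟨j, rfl⟩ : ∃ i, j = i + 2 := ⟨j - 2, by omega⟩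
      exact (hs j).2 (h1 _ (by omega))
    · cases a with
      | zero =>
        obtain rfl : b = k := by omega
        rw [ho]
        exact delta_inj x R _ q δ hq hexq hδ
      | succ a =>
        rw [hs a]
        exact h2 a b (by omega)
end five


theorem locmk_zero {R : Type} [CommRing R] (S : Submonoid R) {M : Type} [AddCommGroup M] [Module R M]
    (m : M) (s : S) : LocalizedModule.mk m s = 0 ↔ ∃ c : S, (c : R) • m = 0 := by
  rw [← LocalizedModule.zero_mk s, LocalizedModule.mk_eq]
  constructor
  · rintro ⟨u, hu⟩
    refine ⟨u * s, ?_⟩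
    simpa [Submonoid.smul_def, mul_smul] using hu
  · rintro ⟨c, hc⟩
    refine ⟨c, ?_⟩
    rw [smul_comm, Submonoid.smul_def c, hc]
    simp

section six
variable (R : Type) [CommRing R]

/-- the generation property -/
def Gen (p : PrimeSpectrum R) {ℓ : ℕ} (x : Fin ℓ → Localization.AtPrime p.asIdeal) : Prop :=
  Ideal.span (Set.range x) = Ideal.map (algebraMap R (Localization.AtPrime p.asIdeal)) p.asIdeal

theorem gen_depth (p : PrimeSpectrum R) {ℓ : ℕ} (x : Fin ℓ → Localization.AtPrime p.asIdeal) (hx : Gen R p x)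
    (M : Type) [AddCommGroup M] [Module R M] (n : ℕ) :
    (n : ℕ∞) ≤ depthAt R p M ↔ ∀ j < n, KosEx x (LocalizedModule p.asIdeal.primeCompl M) j := by
  unfold depthAt
  exact le_rdepth_iff_kos x (hx.trans (Localization.AtPrime.map_eq_maximalIdeal)) _ n

theorem gen_ring_depth (p : PrimeSpectrum R) {ℓ : ℕ} (x : Fin ℓ → Localization.AtPrime p.asIdeal) (hx : Gen R p x)
    (n : ℕ) :
    (n : ℕ∞) ≤ ringDepthAt R p ↔ ∀ j < n, KosEx x (Localization.AtPrime p.asIdeal) j := by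
  unfold ringDepthAt
  exact le_rdepth_iff_kos x (hx.trans (Localization.AtPrime.map_eq_maximalIdeal)) _ n

theorem gen_snoc (p : PrimeSpectrum R) {ℓ : ℕ} (x : Fin ℓ → Localization.AtPrime p.asIdeal) (hx : Gen R p x)
    (y : Localization.AtPrime p.asIdeal) (hy : y ∈ Ideal.map (algebraMap R (Localization.AtPrime p.asIdeal)) p.asIdeal) :
    Gen R p (Fin.snoc x y : Fin (ℓ+1) → Localization.AtPrime p.asIdeal) := by
  unfold Gen at *
  rw [← hx] at hy ⊢
  apply le_antisymm
  · rw [Ideal.span_le]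
    rintro _ ⟨i, rfl⟩
    refine Fin.lastCases ?_ (fun i => ?_) i
    · simpa using hy
    · simpa using Ideal.subset_span (Set.mem_range_self (f := x) i)
  · rw [Ideal.span_le]
    rintro _ ⟨i, rfl⟩
    apply Ideal.subset_span
    exact ⟨i.castSucc, by simp⟩

theorem gen_exists [IsNoetherianRing R] (p : PrimeSpectrum R) : ∃ (ℓ : ℕ) (x : Fin ℓ → Localization.AtPrime p.asIdeal), Gen R p x :=
  Submodule.fg_iff_exists_fin_generating_family.1 (IsNoetherian.noetherian
    (Ideal.map (algebraMap R (Localization.AtPrime p.asIdeal)) p.asIdeal))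

variable (φ : PrimeSpectrum R → ℕ)

theorem tor_gen (hφ : ∀ p, (φ p : ℕ∞) ≤ ringDepthAt R p) (p : PrimeSpectrum R) {ℓ : ℕ}
    (x : Fin ℓ → Localization.AtPrime p.asIdeal) (hx : Gen R p x) (M : ModuleCat.{0} R) :
    (∀ j, φ p < j → torV R (ModuleCat.of R (KosCoker (Localization.AtPrime p.asIdeal) x (φ p))) M j) ∧
    (∀ a b, a + b + 1 = φ p → (torV R (ModuleCat.of R (KosCoker (Localization.AtPrime p.asIdeal) x (φ p))) M (a + 1) ↔
      KosEx x (LocalizedModule p.asIdeal.primeCompl M) b)) := by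
  have hA := (gen_ring_depth R p x hx (φ p)).1 (hφ p)
  have hfl : Module.Flat R (Localization.AtPrime p.asIdeal) := IsLocalization.flat _ p.asIdeal.primeCompl
  obtain ⟨h1, h2⟩ := kosTor x R M (φ p) hA
  refine ⟨h1, fun a b h => (h2 a b h).trans ?_⟩
  have e := LocalizedModule.equivTensorProduct p.asIdeal.primeCompl M
  exact ⟨kosEx_equiv x e.symm b, kosEx_equiv x e b⟩

theorem sphi_depth [IsNoetherianRing R] (hφ : ∀ p, (φ p : ℕ∞) ≤ ringDepthAt R p) (M : ModuleCat.{0} R) (i : ℕ)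
    (h : ∀ X ∈ SphiSet R φ, torV R X M (i+1)) (p : PrimeSpectrum R) :
    ((φ p - i : ℕ) : ℕ∞) ≤ depthAt R p M := by
  have key : ∀ d b, b + d + i + 1 = φ p → ∀ (ℓ : ℕ) (x : Fin ℓ → Localization.AtPrime p.asIdeal), Gen R p x →
      KosEx x (LocalizedModule p.asIdeal.primeCompl M) b := by
    intro d
    induction d with
    | zero =>
      intro b hb ℓ x hx
      exact ((tor_gen R φ hφ p x hx M).2 i b (by omega)).1 (h _ ⟨p, ℓ, x, hx, ⟨Iso.refl _⟩⟩)
    | succ d ih =>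
      intro b hb ℓ x hx
      exact kosEx_snoc x b (ih (b+1) (by omega) _ _ (gen_snoc R p x hx 0 (Ideal.zero_mem _)))
  obtain ⟨ℓ, x, hx⟩ := gen_exists R p
  rw [gen_depth R p x hx]
  intro j hj
  exact key (φ p - i - 1 - j) j (by omega) ℓ x hx

theorem depth_sphi (hφ : ∀ p, (φ p : ℕ∞) ≤ ringDepthAt R p) (M : ModuleCat.{0} R) (i : ℕ)
    (h : ∀ p : PrimeSpectrum R, ((φ p - i : ℕ) : ℕ∞) ≤ depthAt R p M) :
    ∀ X ∈ SphiSet R φ, ∀ j, i < j → torV R X M j := by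
  rintro X ⟨p, ℓ, x, hx, ⟨e⟩⟩ j hj
  rw [tor_iso e]
  have h1 := (gen_depth R p x hx M _).1 (h p)
  have h2 := tor_gen R φ hφ p x hx M
  by_cases hjp : φ p < j
  · exact h2.1 j hjp
  · obtain ⟨a, rfl⟩ : ∃ a, j = a + 1 := ⟨j - 1, by omega⟩
    exact (h2.2 a (φ p - a - 1) (by omega)).2 (h1 _ (by omega))

theorem torShift_iff [IsNoetherianRing R] (hφ : ∀ p, (φ p : ℕ∞) ≤ ringDepthAt R p) (M : ModuleCat.{0} R) (i : ℕ) :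
    M ∈ torShift R (torLeft1 R (torRight1 R (SphiSet R φ))) i ↔
      ∀ p : PrimeSpectrum R, ((φ p - i : ℕ) : ℕ∞) ≤ depthAt R p M := by
  constructor
  · intro h
    refine sphi_depth R φ hφ M i fun X hX => h X (fun Y hY => hY X hX) (i+1) (by omega)
  · intro h X hX j hj
    obtain ⟨M', hM'⟩ := tor_syz_iter M (j - 1)
    have : torV R X M (0 + 1 + (j - 1)) := (hM' 0 X).2 (hX M' (fun Z hZ => (hM' 0 Z).1
      (depth_sphi R φ hφ M i h Z hZ _ (by omega))))
    rwa [show 0 + 1 + (j - 1) = j by omega] at this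

theorem resField_depth_self (p : PrimeSpectrum R) {ℓ : ℕ} (x : Fin ℓ → Localization.AtPrime p.asIdeal)
    (hx : Gen R p x) : ¬ KosEx x (LocalizedModule p.asIdeal.primeCompl (resField R p)) 0 := by
  rw [kosEx_zero]
  intro h
  let f := LocalizedModule.mkLinearMap p.asIdeal.primeCompl (R ⧸ p.asIdeal)
  let g := LocalizedModule.mkLinearMap p.asIdeal.primeCompl (resField R p)
  have hz := h (g (f 1)) (by
    intro i
    have hle : Ideal.map (algebraMap R (Localization.AtPrime p.asIdeal)) p.asIdeal ≤
        LinearMap.ker (LinearMap.toSpanSingleton (Localization.AtPrime p.asIdeal) _ (g (f 1))) := by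
      rw [Ideal.map_le_iff_le_comap]
      intro r hr
      change algebraMap R (Localization.AtPrime p.asIdeal) r • g (f 1) = 0
      rw [algebraMap_smul, ← map_smul, ← map_smul]
      have : r • (1 : R ⧸ p.asIdeal) = 0 := by
        rw [Algebra.smul_def, mul_one]
        exact Ideal.Quotient.eq_zero_iff_mem.2 hr
      rw [this, map_zero, map_zero]
    exact hle (hx ▸ Ideal.subset_span ⟨i, rfl⟩))
  rw [IsLocalizedModule.eq_zero_iff p.asIdeal.primeCompl] at hz
  obtain ⟨c, hc⟩ := hz
  rw [Submonoid.smul_def, ← map_smul, IsLocalizedModule.eq_zero_iff p.asIdeal.primeCompl] at hc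
  obtain ⟨d, hd⟩ := hc
  rw [Submonoid.smul_def, smul_smul, Algebra.smul_def, mul_one] at hd
  have : (d : R) * c ∈ p.asIdeal := Ideal.Quotient.eq_zero_iff_mem.1 hd
  exact (d * c).2 this

theorem resField_depth_ne [IsNoetherianRing R] (p q : PrimeSpectrum R) (hpq : p ≠ q) (n : ℕ) :
    (n : ℕ∞) ≤ depthAt R q (resField R p) := by
  obtain ⟨ℓ, x, hx⟩ := gen_exists R q
  by_cases hle : q.asIdeal ≤ p.asIdeal
  · -- some r in p not in q
    have : ¬ p.asIdeal ≤ q.asIdeal := fun h => hpq (PrimeSpectrum.ext (le_antisymm h hle))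
    obtain ⟨r, hr, hr'⟩ := Set.not_subset.1 this
    have hz : ∀ z : resField R p, r • z = 0 := by
      intro z
      induction z using LocalizedModule.induction_on with
      | h m s =>
        rw [LocalizedModule.smul'_mk]
        obtain ⟨a, rfl⟩ := Ideal.Quotient.mk_surjective m
        have : r • (Ideal.Quotient.mk p.asIdeal a) = 0 := by
          rw [Algebra.smul_def]
          have : algebraMap R (R ⧸ p.asIdeal) r = 0 := Ideal.Quotient.eq_zero_iff_mem.2 hr
          rw [this, zero_mul]
        rw [this, LocalizedModule.zero_mk]
    have hz' : ∀ z : LocalizedModule q.asIdeal.primeCompl (resField R p), z = 0 := by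
      intro z
      induction z using LocalizedModule.induction_on with
      | h m s =>
        rw [locmk_zero]
        exact ⟨⟨r, hr'⟩, hz m⟩
    rw [gen_depth R q x hx]
    intro j hj f _ _
    exact ⟨0, funext fun T => (hz' _).trans (hz' _).symm⟩
  · obtain ⟨r, hr, hr'⟩ := Set.not_subset.1 hle
    have hb : Function.Bijective (fun z : resField R p => r • z) := by
      have := IsLocalizedModule.map_units (LocalizedModule.mkLinearMap p.asIdeal.primeCompl (R ⧸ p.asIdeal))
        (⟨r, hr'⟩ : p.asIdeal.primeCompl)
      rw [Module.End.isUnit_iff] at this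
      exact this
    have hb' : Function.Bijective (fun z : LocalizedModule q.asIdeal.primeCompl (resField R p) => r • z) := by
      constructor
      · intro z w hzw
        rw [← sub_eq_zero]
        have h0 : r • (z - w) = 0 := by rw [smul_sub, sub_eq_zero]; exact hzw
        revert h0
        generalize z - w = y
        induction y using LocalizedModule.induction_on with
        | h m s =>
          intro h0
          rw [LocalizedModule.smul'_mk, locmk_zero] at h0
          obtain ⟨c, hc⟩ := h0
          rw [locmk_zero]
          refine ⟨c, hb.1 ?_⟩
          change r • (c : R) • m = r • (0 : resField R p)
          rw [smul_zero, smul_comm, hc]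
      · intro z
        induction z using LocalizedModule.induction_on with
        | h m s =>
          obtain ⟨m', rfl⟩ := hb.2 m
          exact ⟨LocalizedModule.mk m' s, LocalizedModule.smul'_mk _ _ _⟩
    rw [gen_depth R q _ (gen_snoc R q x hx (algebraMap R _ r) (Ideal.mem_map_of_mem _ hr))]
    intro j hj
    refine kosEx_inv _ (Fin.last ℓ) ?_ j
    simpa using hb'
end six

/-- every function `φ : Spec R → ℤ≥0` bounded by the depth function gives a
hereditary Tor-pair generated by the set `𝒮_φ` of modules of finite flat dimension whose
right class is the depth-condition class, with the expected shifted classes. -/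
theorem stmt15 (R : Type) [CommRing R] [IsNoetherianRing R]
    (φ : PrimeSpectrum R → ℕ) (hφ : ∀ p, (φ p : ℕ∞) ≤ ringDepthAt R p) :
    (∀ X ∈ SphiSet R φ, ∃ n : ℕ, flatDimLE R X n) ∧
    IsHereditaryTorPair R (torLeft1 R (torRight1 R (SphiSet R φ))) (torRight1 R (SphiSet R φ)) ∧
    torRight1 R (SphiSet R φ) =
      {M : ModuleCat.{0} R | ∀ p : PrimeSpectrum R, (φ p : ℕ∞) ≤ depthAt R p ↥M} ∧
    (∀ i : ℕ,
      torShift R (torLeft1 R (torRight1 R (SphiSet R φ))) i =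
        {M : ModuleCat.{0} R | ∀ p : PrimeSpectrum R,
          ((φ p - i : ℕ) : ℕ∞) ≤ depthAt R p ↥M}) ∧
    (∀ (p : PrimeSpectrum R) (i : ℕ),
      ModuleCat.of R (resField R p) ∈ torShift R (torLeft1 R (torRight1 R (SphiSet R φ))) i ↔
        φ p ≤ i) := by
  have hC : ∀ M, M ∈ torRight1 R (SphiSet R φ) ↔ ∀ p : PrimeSpectrum R, ((φ p - 0 : ℕ) : ℕ∞) ≤ depthAt R p ↥M :=
    fun M => ⟨fun h => sphi_depth R φ hφ M 0 h, fun h X hX => depth_sphi R φ hφ M 0 h X hX 1 (by omega)⟩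
  refine ⟨?_, ⟨⟨rfl, ?_⟩, ?_⟩, ?_, ?_, ?_⟩
  · rintro X ⟨p, ℓ, x, hx, ⟨e⟩⟩
    refine ⟨φ p, fun N j hj => ?_⟩
    rw [tor_iso e]
    exact (tor_gen R φ hφ p x hx N).1 j hj
  · ext M
    exact ⟨fun hM X hX => hX M hM, fun h X hX => h X (fun Y hY => hY X hX)⟩
  · intro X hX Y hY i hi
    exact (torShift_iff R φ hφ Y 0).2 ((hC Y).1 hY) X hX i hi
  · ext M
    exact hC M
  · intro i
    ext M
    exact torShift_iff R φ hφ M i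
  · intro p i
    rw [torShift_iff R φ hφ]
    constructor
    · intro h
      by_contra hc
      obtain ⟨ℓ, x, hx⟩ := gen_exists R p
      exact resField_depth_self R p x hx ((gen_depth R p x hx _ _).1 (h p) 0 (by omega))
    · intro h q
      by_cases hpq : p = q
      · subst hpq
        rw [Nat.sub_eq_zero_of_le h]
        simp
      · exact resField_depth_ne R p q hpq _
end
end

section
/- Let R be a commutative noetherian ring and C a nonempty class of R-modules closed under submodules, extensions, and direct limits. Then there is a subset X of Spec R such that C = {M : Ass M ⊆ X}. -/
open CategoryTheory Opposite

noncomputable section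

/-- The left `Ext^1`-orthogonal class. -/
def leftPerp1 (R : Type) [Ring R] (𝒳 : Set (ModuleCat.{0} R)) : Set (ModuleCat.{0} R) :=
  {M | ∀ X ∈ 𝒳, extV R M X 1}

/-- The right `Ext^1`-orthogonal class. -/
def rightPerp1 (R : Type) [Ring R] (𝒳 : Set (ModuleCat.{0} R)) : Set (ModuleCat.{0} R) :=
  {N | ∀ X ∈ 𝒳, extV R X N 1}

/-- `(𝒞, 𝒲)` is a cotorsion pair. -/
def IsCotorsionPair (R : Type) [Ring R] (𝒞 𝒲 : Set (ModuleCat.{0} R)) : Prop :=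
  𝒞 = leftPerp1 R 𝒲 ∧ 𝒲 = rightPerp1 R 𝒞

/-- `(𝒞, 𝒲)` is a hereditary cotorsion pair. -/
def IsHereditaryCotorsionPair (R : Type) [Ring R] (𝒞 𝒲 : Set (ModuleCat.{0} R)) : Prop :=
  IsCotorsionPair R 𝒞 𝒲 ∧ ∀ X ∈ 𝒞, ∀ Y ∈ 𝒲, ∀ i : ℕ, 1 ≤ i → extV R X Y i

/-- The class `𝒞_(i) = {M ∣ Ext^j(M, W) = 0 for all j > i and all W ∈ 𝒲}`. -/
def cotShift (R : Type) [Ring R] (𝒲 : Set (ModuleCat.{0} R)) (i : ℕ) : Set (ModuleCat.{0} R) :=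
  {M | ∀ Y ∈ 𝒲, ∀ j : ℕ, i < j → extV R M Y j}

/-- The class of pure-injective `R`-modules of finite injective dimension. -/
def PIFinInj (R : Type) [CommRing R] : Set (ModuleCat.{0} R) :=
  {N | PureInjective R ↥N ∧ ∃ n : ℕ, injDimLE R N n}

section helpers

structure ClosedClass (R : Type) [CommRing R] (𝒞 : Set (ModuleCat.{0} R)) : Prop where
  hne : 𝒞.Nonempty
  hsub : ∀ M ∈ 𝒞, ∀ (A : Type) [AddCommGroup A] [Module R A] (f : A →ₗ[R] ↥M),
      Function.Injective f → ModuleCat.of R A ∈ 𝒞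
  hext : ∀ (L M N : ModuleCat.{0} R), L ∈ 𝒞 → N ∈ 𝒞 →
      ∀ (f : ↥L →ₗ[R] ↥M) (g : ↥M →ₗ[R] ↥N), Function.Injective f →
        Function.Surjective g → LinearMap.range f = LinearMap.ker g → M ∈ 𝒞

variable {R : Type} [CommRing R] {𝒞 : Set (ModuleCat.{0} R)}

theorem ClosedClass.sub (h : ClosedClass R 𝒞) {A B : Type} [AddCommGroup A] [Module R A]
    [AddCommGroup B] [Module R B] (hB : ModuleCat.of R B ∈ 𝒞) (f : A →ₗ[R] B)
    (hf : Function.Injective f) : ModuleCat.of R A ∈ 𝒞 :=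
  h.hsub (ModuleCat.of R B) hB A f hf

theorem ClosedClass.zero (h : ClosedClass R 𝒞) (A : Type) [AddCommGroup A] [Module R A]
    [Subsingleton A] : ModuleCat.of R A ∈ 𝒞 := by
  obtain ⟨M, hM⟩ := h.hne
  exact h.hsub M hM A 0 (Function.injective_of_subsingleton _)

theorem ClosedClass.ext (h : ClosedClass R 𝒞) {L M N : Type} [AddCommGroup L] [Module R L]
    [AddCommGroup M] [Module R M] [AddCommGroup N] [Module R N]
    (hL : ModuleCat.of R L ∈ 𝒞) (hN : ModuleCat.of R N ∈ 𝒞)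
    (f : L →ₗ[R] M) (g : M →ₗ[R] N) (hf : Function.Injective f)
    (hg : Function.Surjective g) (hfg : LinearMap.range f = LinearMap.ker g) :
    ModuleCat.of R M ∈ 𝒞 :=
  h.hext (ModuleCat.of R L) (ModuleCat.of R M) (ModuleCat.of R N) hL hN f g hf hg hfg

theorem ClosedClass.prod (h : ClosedClass R 𝒞) {L N : Type} [AddCommGroup L] [Module R L]
    [AddCommGroup N] [Module R N]
    (hL : ModuleCat.of R L ∈ 𝒞) (hN : ModuleCat.of R N ∈ 𝒞) :
    ModuleCat.of R (L × N) ∈ 𝒞 :=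
  h.ext hL hN (LinearMap.inl R L N) (LinearMap.snd R L N) LinearMap.inl_injective
    LinearMap.snd_surjective (LinearMap.range_inl R L N)

/-- The saturation of a submodule with respect to a prime. -/
def satur (p : Ideal R) [hp : p.IsPrime] {Q : Type} [AddCommGroup Q] [Module R Q]
    (K : Submodule R Q) : Submodule R Q where
  carrier := {y | ∃ a, a ∉ p ∧ a • y ∈ K}
  zero_mem' := ⟨1, p.ne_top_iff_one.mp hp.ne_top, by simp⟩
  add_mem' := by
    rintro x y ⟨a, ha, hx⟩ ⟨b, hb, hy⟩
    refine ⟨a * b, fun h => (hp.mem_or_mem h).elim ha hb, ?_⟩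
    rw [smul_add]
    refine K.add_mem ?_ ?_
    · rw [mul_comm, mul_smul]; exact K.smul_mem _ hx
    · rw [mul_smul]; exact K.smul_mem _ hy
  smul_mem' := by
    rintro c x ⟨a, ha, hx⟩
    exact ⟨a, ha, by rw [smul_comm]; exact K.smul_mem _ hx⟩

theorem satur_common (p : Ideal R) [hp : p.IsPrime] {Q : Type} [AddCommGroup Q] [Module R Q]
    (K : Submodule R Q) (L : Submodule R Q) (hL : L.FG) (hle : L ≤ satur p K) :
    ∃ a, a ∉ p ∧ ∀ y ∈ L, a • y ∈ K := by
  induction L, hL using Submodule.fg_induction with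
  | singleton x =>
    obtain ⟨a, ha, hx⟩ := hle (Submodule.mem_span_singleton_self x)
    refine ⟨a, ha, fun y hy => ?_⟩
    obtain ⟨c, rfl⟩ := Submodule.mem_span_singleton.mp hy
    rw [smul_comm]; exact K.smul_mem _ hx
  | sup L₁ L₂ _ _ h₁ h₂ =>
    obtain ⟨a, ha, h₁⟩ := h₁ (le_sup_left.trans hle)
    obtain ⟨b, hb, h₂⟩ := h₂ (le_sup_right.trans hle)
    refine ⟨a * b, fun h => (hp.mem_or_mem h).elim ha hb, fun y hy => ?_⟩
    obtain ⟨u, hu, v, hv, rfl⟩ := Submodule.mem_sup.mp hy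
    rw [smul_add]
    refine K.add_mem ?_ ?_
    · rw [mul_comm, mul_smul]; exact K.smul_mem _ (h₁ u hu)
    · rw [mul_smul]; exact K.smul_mem _ (h₂ v hv)

theorem ClosedClass.coprimary [IsNoetherianRing R] (h : ClosedClass R 𝒞)
    (p : Ideal R) [hp : p.IsPrime] (hpC : ModuleCat.of R (R ⧸ p) ∈ 𝒞)
    {M : Type} [AddCommGroup M] [Module R M] [Module.Finite R M] (N : Submodule R M)
    (h1 : ∀ s, s ∉ p → ∀ m : M, s • m ∈ N → m ∈ N)
    (h2 : ∀ s ∈ p, ∀ m : M, ∃ n : ℕ, s ^ n • m ∈ N) :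
    ModuleCat.of R (M ⧸ N) ∈ 𝒞 := by
  induction N using WellFoundedGT.induction with
  | ind N ih =>
  by_cases hN : N = ⊤
  · subst hN
    exact h.zero _
  have : Nontrivial (M ⧸ N) := Submodule.Quotient.nontrivial_iff.mpr hN
  have h1' : ∀ s, s ∉ p → ∀ y : M ⧸ N, s • y = 0 → y = 0 := by
    intro s hs y hy
    obtain ⟨m, rfl⟩ := N.mkQ_surjective y
    rw [← map_smul] at hy
    simp only [Submodule.mkQ_apply, Submodule.Quotient.mk_eq_zero] at hy ⊢
    exact h1 s hs m hy
  obtain ⟨q, hq⟩ := associatedPrimes.nonempty R (M ⧸ N)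
  have hqp : q = p := by
    obtain ⟨hqpr, x, hx⟩ := isAssociatedPrime_iff.mp hq
    have hmem : ∀ r, r ∈ q ↔ r • x = 0 := by
      intro r; rw [hx, Submodule.mem_colon_singleton, Submodule.mem_bot]
    apply le_antisymm
    · intro s hs
      by_contra hsp
      have hx0 := h1' s hsp x ((hmem s).mp hs)
      exact hqpr.ne_top ((Ideal.eq_top_iff_one q).mpr ((hmem 1).mpr (by simp [hx0])))
    · intro s hs
      obtain ⟨m, rfl⟩ := N.mkQ_surjective x
      obtain ⟨n, hn⟩ := h2 s hs m
      apply hqpr.mem_of_pow_mem n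
      rw [hmem, ← map_smul]
      exact (Submodule.Quotient.mk_eq_zero N).mpr hn
  subst hqp
  obtain ⟨_, f, hf⟩ := (isAssociatedPrime_iff_exists_injective_linearMap q (M ⧸ N)).mp hq
  set L := satur q (LinearMap.range f) with hLdef
  have hrange : ModuleCat.of R (LinearMap.range f) ∈ 𝒞 :=
    h.sub hpC (LinearEquiv.ofInjective f hf).symm.toLinearMap
      (LinearEquiv.ofInjective f hf).symm.injective
  obtain ⟨a, ha, haL⟩ := satur_common q (LinearMap.range f) L (IsNoetherian.noetherian L) le_rfl
  have hL : ModuleCat.of R L ∈ 𝒞 := by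
    refine h.sub hrange (((LinearMap.lsmul R (M ⧸ N) a).comp L.subtype).codRestrict _
      (fun y => haL y y.2)) ?_
    rw [← LinearMap.ker_eq_bot, LinearMap.ker_eq_bot']
    intro y hy
    have hy' := congrArg Subtype.val hy
    exact Subtype.ext (h1' a ha y hy')
  set N' := L.comap N.mkQ with hN'
  have hle : N ≤ N' := by
    intro m hm
    have : N.mkQ m = 0 := by simpa using hm
    show N.mkQ m ∈ L
    rw [this]; exact L.zero_mem
  have h1q : (1 : R) ∉ q := q.ne_top_iff_one.mp hp.ne_top
  have hlt : N < N' := by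
    refine lt_of_le_of_ne hle fun heq => ?_
    obtain ⟨m, hm⟩ := N.mkQ_surjective (f (Ideal.Quotient.mk q 1))
    have hmN' : m ∈ N' := by
      show N.mkQ m ∈ L
      exact ⟨1, h1q, by rw [hm, one_smul]; exact ⟨_, rfl⟩⟩
    rw [← heq] at hmN'
    have h0 : N.mkQ m = 0 := by simpa using hmN'
    rw [h0] at hm
    have := hf (hm.symm.trans (map_zero f).symm)
    exact h1q (Ideal.Quotient.eq_zero_iff_mem.mp this)
  have hquot : ModuleCat.of R (M ⧸ N') ∈ 𝒞 := by
    refine ih N' hlt ?_ ?_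
    · rintro s hs m ⟨b, hb, hbm⟩
      refine ⟨b * s, fun hh => (hp.mem_or_mem hh).elim hb hs, ?_⟩
      rw [map_smul] at hbm
      rwa [mul_smul]
    · intro s hs m
      obtain ⟨n, hn⟩ := h2 s hs m
      exact ⟨n, hle hn⟩
  refine h.ext hL hquot L.subtype (Submodule.factor hle) L.injective_subtype
    (Submodule.factor_surjective hle) ?_
  ext y
  obtain ⟨m, rfl⟩ := N.mkQ_surjective y
  rw [Submodule.range_subtype, LinearMap.mem_ker]
  exact (Submodule.Quotient.mk_eq_zero N' (x := m)).symm

theorem ClosedClass.inf (h : ClosedClass R 𝒞) {M : Type} [AddCommGroup M] [Module R M]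
    (A B : Submodule R M) (hA : ModuleCat.of R (M ⧸ A) ∈ 𝒞) (hB : ModuleCat.of R (M ⧸ B) ∈ 𝒞) :
    ModuleCat.of R (M ⧸ (A ⊓ B)) ∈ 𝒞 := by
  refine h.sub (h.prod hA hB) ((Submodule.factor inf_le_left).prod
    (Submodule.factor inf_le_right)) ?_
  rw [← LinearMap.ker_eq_bot, LinearMap.ker_eq_bot']
  intro y hy
  obtain ⟨m, rfl⟩ := (A ⊓ B).mkQ_surjective y
  simpa [Submodule.Quotient.mk_eq_zero] using hy

theorem ClosedClass.finite [IsNoetherianRing R] (h : ClosedClass R 𝒞)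
    {M : Type} [AddCommGroup M] [Module R M] [Module.Finite R M]
    (hM : ∀ p ∈ associatedPrimes R M, ModuleCat.of R (R ⧸ p) ∈ 𝒞) :
    ModuleCat.of R M ∈ 𝒞 := by
  classical
  obtain ⟨t, ht⟩ := Submodule.IsLasker.exists_isMinimalPrimaryDecomposition
    (Submodule.isLasker R M) (⊥ : Submodule R M)
  have key : ∀ J ∈ t, ModuleCat.of R (M ⧸ J) ∈ 𝒞 := by
    intro J hJ
    have hass := ht.mem_associatedPrimes hJ
    have := hass.1
    refine h.coprimary (J.colon Set.univ).radical (hM _ hass) J ?_ ?_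
    · intro s hs m hm
      exact ((ht.primary hJ).mem_or_mem hm).resolve_right hs
    · rintro s ⟨n, hn⟩ m
      exact ⟨n, Submodule.mem_colon.mp hn m (Set.mem_univ m)⟩
  have key2 : ∀ s : Finset (Submodule R M), s ⊆ t → ModuleCat.of R (M ⧸ s.inf id) ∈ 𝒞 := by
    intro s
    induction s using Finset.induction_on with
    | empty => intro _; rw [Finset.inf_empty]; exact h.zero _
    | insert J s _ ih =>
      intro hs
      rw [Finset.inf_insert]
      exact h.inf _ _ (key J (hs (Finset.mem_insert_self _ _)))
        (ih ((Finset.subset_insert _ _).trans hs))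
  have := key2 t subset_rfl
  rw [ht.inf_eq] at this
  exact h.sub this (Submodule.quotEquivOfEqBot ⊥ rfl).symm.toLinearMap
    (Submodule.quotEquivOfEqBot ⊥ rfl).symm.injective

end helpers

/-- over a commutative noetherian ring, a nonempty class of modules closed
under submodules, extensions and direct limits is of the form
`{M ∣ Ass M ⊆ X}` for some set `X` of prime ideals. -/
theorem stmt16 (R : Type) [CommRing R] [IsNoetherianRing R]
    (𝒞 : Set (ModuleCat.{0} R)) (hne : 𝒞.Nonempty)
    (hsub : ∀ M ∈ 𝒞, ∀ (A : Type) [AddCommGroup A] [Module R A] (f : A →ₗ[R] ↥M),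
      Function.Injective f → ModuleCat.of R A ∈ 𝒞)
    (hext : ∀ (L M N : ModuleCat.{0} R), L ∈ 𝒞 → N ∈ 𝒞 →
      ∀ (f : ↥L →ₗ[R] ↥M) (g : ↥M →ₗ[R] ↥N), Function.Injective f →
        Function.Surjective g → LinearMap.range f = LinearMap.ker g → M ∈ 𝒞)
    (hlim : ∀ (ι : Type) [Preorder ι] [IsDirected ι (· ≤ ·)] [DecidableEq ι] [Nonempty ι]
      (G : ι → Type) [∀ i, AddCommGroup (G i)] [∀ i, Module R (G i)]
      (f : ∀ i j, i ≤ j → G i →ₗ[R] G j), DirectedSystem G (fun i j h => f i j h) →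
      (∀ i, ModuleCat.of R (G i) ∈ 𝒞) → ModuleCat.of R (Module.DirectLimit G f) ∈ 𝒞) :
    ∃ X : Set (Ideal R), 𝒞 = {M : ModuleCat.{0} R | associatedPrimes R (↥M) ⊆ X} := by
  classical
  have h : ClosedClass R 𝒞 := ⟨hne, hsub, hext⟩
  refine ⟨{p | ModuleCat.of R (R ⧸ p) ∈ 𝒞}, ?_⟩
  ext M
  constructor
  · intro hM p hp
    obtain ⟨_, f, hf⟩ := (isAssociatedPrime_iff_exists_injective_linearMap p M).mp hp
    exact hsub M hM _ f hf
  · intro hM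
    have hl := hlim {N : Submodule R M // N.FG} (fun N => N.1) (Module.fgSystem R M)
      inferInstance (fun N => by
        have : Module.Finite R N.1 := Module.Finite.iff_fg.mpr N.2
        exact h.finite fun p hp =>
          hM (associatedPrimes.subset_of_injective N.1.injective_subtype hp))
    exact h.sub (A := M) hl (Module.fgSystem.equiv R M).symm.toLinearMap
      (Module.fgSystem.equiv R M).symm.injective
end
end
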